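/- arXiv:1102.0959 — 12 statements merged into one kernel-verified Lean document; each statement's English description precedes it below -/
import Mathlib

section
/- Let n ≥ 2 be an integer and let α ≥ 1 be a real number such that (α² + n − 1)^{(n−2)/2} (α² − 1) < α^n. Set a = (α² + n − 1)^{(n−2)/2} (α² − 1) / α^n and b = n (α² + n − 1)^{(n−2)/2} / α. Then a < 1, and for all real X, Y ≥ 0 one has (X² + (n−1)Y²)^{n/2} ≥ a·X^n + b·X·Y^{n−1}, with equality if and only if X = α·Y. -/
lemma core_aux (G G' ψ : ℝ → ℝ) (v0 : ℝ) (hv0 : 0 < v0) (hc : ContinuousOn G (Set.Ici 0))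
    (hd : ∀ v, 0 < v → HasDerivAt G (G' v) v)
    (hneg : ∀ v, 0 < v → (G' v < 0 ↔ ψ v < 0))
    (hpos : ∀ v, 0 < v → (0 < G' v ↔ 0 < ψ v))
    (hψ : ConvexOn ℝ (Set.Ici 0) ψ) (h0 : ψ v0 = 0) (hG : G v0 < G 0) :
    ∀ v, 0 ≤ v → v ≠ v0 → G v0 < G v := by
  have mvt : ∀ p q, 0 ≤ p → p < q → ∃ r, p < r ∧ r < q ∧ G' r * (q - p) = G q - G p := by
    intro p q hp hpq
    obtain ⟨r, hr, h⟩ := exists_hasDerivAt_eq_slope G G' hpq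
      (hc.mono (fun x hx => le_trans hp hx.1)) (fun x hx => hd x (lt_of_le_of_lt hp hx.1))
    refine ⟨r, hr.1, hr.2, ?_⟩
    rw [h]; field_simp [sub_ne_zero.2 hpq.ne']
  -- convexity
  have conv : ∀ p q r, 0 ≤ p → p < q → q < r → (r - p) * ψ q ≤ (r - q) * ψ p + (q - p) * ψ r := by
    intro p q r hp hpq hqr
    have hpr : 0 < r - p := by linarith
    have := hψ.2 (show p ∈ Set.Ici (0:ℝ) from hp) (show r ∈ Set.Ici (0:ℝ) from by
        simp only [Set.mem_Ici]; linarith)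
      (show 0 ≤ (r - q) / (r - p) from div_nonneg (by linarith) hpr.le)
      (show 0 ≤ (q - p) / (r - p) from div_nonneg (by linarith) hpr.le)
      (by field_simp; ring)
    simp only [smul_eq_mul] at this
    have e : (r - q) / (r - p) * p + (q - p) / (r - p) * r = q := by field_simp; ring
    rw [e] at this
    have h2 := mul_le_mul_of_nonneg_left this hpr.le
    calc _ ≤ _ := h2
      _ = _ := by field_simp
  intro v hv hne
  rcases lt_or_gt_of_ne hne with h | h
  · by_contra! hcon
    have hvp : 0 < v := by
      rcases hv.lt_or_eq with h | h
      · exact h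
      · subst h; linarith
    obtain ⟨p, hp1, hp2, hp3⟩ := mvt 0 v le_rfl hvp
    obtain ⟨q, hq1, hq2, hq3⟩ := mvt v v0 hv h
    have h1 : ψ p < 0 := by
      rw [← hneg p hp1]; by_contra! hh
      nlinarith [mul_nonneg hh (by linarith : 0 ≤ v - 0)]
    have h2 : 0 ≤ ψ q := by
      by_contra! hh
      rw [← hneg q (by linarith)] at hh
      nlinarith [mul_pos_of_neg_of_neg hh (by linarith : v - v0 < 0)]
    have := conv p q v0 hp1.le (by linarith) hq2
    rw [h0] at this
    nlinarith [mul_pos_of_neg_of_neg h1 (by linarith : q - v0 < 0),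
      mul_nonneg h2 (by linarith : 0 ≤ v0 - p)]
  · obtain ⟨p, hp1, hp2, hp3⟩ := mvt 0 v0 le_rfl hv0
    obtain ⟨q, hq1, hq2, hq3⟩ := mvt v0 v hv0.le h
    have h1 : ψ p < 0 := by
      rw [← hneg p hp1]; by_contra! hh
      nlinarith [mul_nonneg hh (by linarith : 0 ≤ v0 - 0)]
    have h2 : 0 < ψ q := by
      have := conv p v0 q hp1.le hp2 hq1
      rw [h0] at this
      by_contra! hh
      nlinarith [mul_pos_of_neg_of_neg h1 (by linarith : v0 - q < 0),
        mul_nonneg_of_nonpos_of_nonpos hh (by linarith : p - v0 ≤ 0)]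
    rw [← hpos q (by linarith)] at h2
    nlinarith [mul_pos h2 (by linarith : 0 < v - v0)]

lemma main_aux (m : ℝ) (hm : 3 ≤ m) (c v0 : ℝ) (hcp : 0 < c) (hv0 : 0 < v0)
    (h0 : (1 + (m-1)*v0) ^ ((m-2)/2) = c * v0 ^ ((m-3)/2))
    (hG : (1 + (m-1)*v0) ^ (m/2) - m * c * v0 ^ ((m-1)/2) < 1) :
    ∀ v, 0 ≤ v → v ≠ v0 → (1 + (m-1)*v0) ^ (m/2) - m * c * v0 ^ ((m-1)/2) <
      (1 + (m-1)*v) ^ (m/2) - m * c * v ^ ((m-1)/2) := by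
  have hp : 0 < (m-2)/2 := by linarith
  have hy : ∀ v, 0 < v → (c ^ (2/(m-2)) * v ^ ((m-3)/(m-2))) ^ ((m-2)/2) = c * v ^ ((m-3)/2) := by
    intro v hv
    have : m - 2 ≠ 0 := by linarith
    rw [Real.mul_rpow (by positivity) (by positivity), ← Real.rpow_mul hcp.le,
      ← Real.rpow_mul hv.le]
    congr 1
    · rw [show 2/(m-2)*((m-2)/2) = 1 by field_simp, Real.rpow_one]
    · congr 1; field_simp
  have hx : ∀ v, 0 < v → 0 < 1 + (m-1)*v := fun v hv => by
    have : 0 < m - 1 := by linarith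
    positivity
  apply core_aux (fun v => (1 + (m-1)*v) ^ (m/2) - m * c * v ^ ((m-1)/2))
    (fun v => m*(m-1)/2 * ((1 + (m-1)*v) ^ ((m-2)/2) - c * v ^ ((m-3)/2)))
    (fun v => (1 + (m-1)*v) - c ^ (2/(m-2)) * v ^ ((m-3)/(m-2))) v0 hv0
  · apply Continuous.continuousOn
    have h1 : Continuous fun v : ℝ => (1 + (m-1)*v) ^ (m/2) :=
      (by fun_prop : Continuous fun v : ℝ => 1 + (m-1)*v).rpow_const
        (fun _ => Or.inr (by linarith))
    have h2 : Continuous fun v : ℝ => v ^ ((m-1)/2) :=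
      continuous_id.rpow_const (fun _ => Or.inr (by linarith))
    fun_prop
  · intro v hv
    have h1 : HasDerivAt (fun v : ℝ => 1 + (m-1)*v) (m-1) v := by
      simpa using ((hasDerivAt_id v).const_mul (m-1)).const_add 1
    have h2 := h1.rpow_const (p := m/2) (Or.inl (hx v hv).ne')
    have h3 := (Real.hasDerivAt_rpow_const (x := v) (p := (m-1)/2) (Or.inl hv.ne')).const_mul (m*c)
    refine (h2.sub h3).congr_deriv ?_
    rw [show m/2-1 = (m-2)/2 by ring, show (m-1)/2-1 = (m-3)/2 by ring]
    ring
  · intro v hv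
    have hk : 0 < m*(m-1)/2 := by nlinarith
    rw [show ∀ x : ℝ, m*(m-1)/2 * x < 0 ↔ x < 0 from fun x => by
        rw [mul_neg_iff]; constructor
        · rintro (h | h)
          · exact h.2
          · linarith [h.1]
        · exact fun h => Or.inl ⟨hk, h⟩, sub_neg, sub_neg, ← hy v hv,
      Real.rpow_lt_rpow_iff (hx v hv).le (by positivity) hp]
  · intro v hv
    have hk : 0 < m*(m-1)/2 := by nlinarith
    rw [mul_pos_iff_of_pos_left hk, sub_pos, sub_pos, ← hy v hv,
      Real.rpow_lt_rpow_iff (by positivity) (hx v hv).le hp]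
  · have hcc := (Real.concaveOn_rpow (p := (m-3)/(m-2))
      (div_nonneg (by linarith) (by linarith))
      (by rw [div_le_one (by linarith)]; linarith)).neg.smul
      (c := c ^ (2/(m-2))) (by positivity)
    have hl : ConvexOn ℝ (Set.Ici (0:ℝ)) (fun v : ℝ => 1 + (m-1)*v) := by
      refine ⟨convex_Ici 0, ?_⟩
      intro x _ y _ s t _ _ hst
      simp only [smul_eq_mul]
      apply le_of_eq
      linear_combination - hst
    refine (hl.add hcc).congr ?_
    intro v _
    simp [sub_eq_add_neg]
  · rw [← hy v0 hv0, Real.rpow_left_inj (hx v0 hv0).le (by positivity) hp.ne'] at h0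
    linarith
  · rw [Real.zero_rpow (by linarith : (m-1)/2 ≠ 0)]
    simpa using hG

/-- Lemma 10.1.
Let `n ≥ 2`, `α ≥ 1` with `(α² + n - 1)^((n-2)/2) (α² - 1) < α^n`.  With
`a = (α² + n - 1)^((n-2)/2) (α² - 1) / α^n` and
`b = n (α² + n - 1)^((n-2)/2) / α`, we have `a < 1` and for all `X, Y ≥ 0`,
`(X² + (n-1)Y²)^(n/2) ≥ a X^n + b X Y^(n-1)`, with equality iff `X = α Y`. -/
theorem stmt1 (n : ℕ) (hn : 2 ≤ n) (α : ℝ) (hα : 1 ≤ α)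
    (hcrit : (α ^ 2 + (n : ℝ) - 1) ^ (((n : ℝ) - 2) / 2) * (α ^ 2 - 1) < α ^ (n : ℝ))
    (a b : ℝ)
    (ha : a = (α ^ 2 + (n : ℝ) - 1) ^ (((n : ℝ) - 2) / 2) * (α ^ 2 - 1) / α ^ (n : ℝ))
    (hb : b = (n : ℝ) * (α ^ 2 + (n : ℝ) - 1) ^ (((n : ℝ) - 2) / 2) / α) :
    a < 1 ∧
    ∀ X Y : ℝ, 0 ≤ X → 0 ≤ Y →
      ((X ^ 2 + ((n : ℝ) - 1) * Y ^ 2) ^ ((n : ℝ) / 2) ≥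
          a * X ^ (n : ℝ) + b * X * Y ^ ((n : ℝ) - 1)) ∧
      ((X ^ 2 + ((n : ℝ) - 1) * Y ^ 2) ^ ((n : ℝ) / 2) =
          a * X ^ (n : ℝ) + b * X * Y ^ ((n : ℝ) - 1) ↔ X = α * Y) := by
  have hm : (2:ℝ) ≤ n := by exact_mod_cast hn
  have hαp : 0 < α := by linarith
  have ha1 : a < 1 := by
    rw [ha, div_lt_one (by positivity)]; exact hcrit
  refine ⟨ha1, ?_⟩
  rcases hn.eq_or_lt with h2 | h3
  · subst h2
    intro X Y hX hY
    norm_num at ha hb ⊢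
    subst ha hb
    have key : (X^2+Y^2) - ((α^2-1)/α^2*X^2 + 2/α*X*Y) = (X - α*Y)^2/α^2 := by
      field_simp; ring
    constructor
    · have : 0 ≤ (X - α*Y)^2/α^2 := by positivity
      linarith
    · rw [← sub_eq_zero, key, div_eq_zero_iff, sq_eq_zero_iff, sub_eq_zero]
      have : α^2 ≠ 0 := by positivity
      tauto
  have h3 : (3:ℝ) ≤ n := by exact_mod_cast h3
  generalize (n:ℝ) = m at *
  set S := α^2 + m - 1 with hS
  have hSp : 0 < S := by nlinarith
  have hpow : ∀ p : ℝ, ((α^2)⁻¹) ^ (p/2) = (α^p)⁻¹ := by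
    intro p
    rw [Real.inv_rpow (by positivity), ← Real.rpow_natCast α 2, ← Real.rpow_mul hαp.le]
    congr 2; push_cast; ring
  have hv : 1 + (m-1)*(α^2)⁻¹ = S * (α^2)⁻¹ := by rw [hS]; field_simp; ring
  have hb' : b = m * (S^((m-2)/2)/α) := by rw [hb]; ring
  have hGa : (1 + (m-1)*(α^2)⁻¹) ^ (m/2) - m * (S^((m-2)/2)/α) * ((α^2)⁻¹) ^ ((m-1)/2) = a := by
    rw [hv, Real.mul_rpow hSp.le (by positivity), hpow, hpow, ha,
      show m/2 = (m-2)/2 + 1 by ring, Real.rpow_add_one hSp.ne', Real.rpow_sub_one hαp.ne']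
    have : α^m ≠ 0 := by positivity
    field_simp
    rw [hS]; ring
  have main := main_aux m h3 (S^((m-2)/2)/α) (α^2)⁻¹ (by positivity) (by positivity) (by
    rw [hv, Real.mul_rpow hSp.le (by positivity), hpow, hpow,
      show m - 2 = (m-3)+1 by ring, Real.rpow_add_one hαp.ne']
    have : α^(m-3) ≠ 0 := by positivity
    field_simp) (by rw [hGa]; exact ha1)
  rw [hGa, ← hb'] at main
  rw [← hb'] at hGa
  intro X Y hX hY
  rcases hX.eq_or_lt with h | hXp
  · subst h
    rw [Real.zero_rpow (by linarith)]
    have hm1 : 0 < m - 1 := by linarith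
    have : 0 ≤ (0^2 + (m-1)*Y^2)^(m/2) := by positivity
    constructor
    · simpa using this
    · constructor
      · intro h
        by_contra hne
        have hY' : Y ≠ 0 := by rintro rfl; simp at hne
        have : 0 < (0^2 + (m-1)*Y^2)^(m/2) := by positivity
        rw [h] at this; simp at this
      · intro h
        have : Y = 0 := by
          rcases mul_eq_zero.1 h.symm with h | h
          · linarith
          · exact h
        subst this
        simp; rw [Real.zero_rpow (by linarith)]
  have e1 : (X^2 + (m-1)*Y^2)^(m/2) = X^m * (1 + (m-1)*(Y/X)^2)^(m/2) := by
    have hm1 : 0 < m - 1 := by linarith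
    have : X^m = (X^2)^(m/2) := by
      rw [← Real.rpow_natCast X 2, ← Real.rpow_mul hX]
      congr 1; push_cast; ring
    rw [this, ← Real.mul_rpow (by positivity) (by positivity)]
    congr 1; field_simp
  have e2 : X * Y^(m-1) = X^m * ((Y/X)^2)^((m-1)/2) := by
    have : ((Y/X)^2)^((m-1)/2) = (Y/X)^(m-1) := by
      rw [← Real.rpow_natCast (Y/X) 2, ← Real.rpow_mul (by positivity)]
      congr 1; push_cast; ring
    rw [this, Real.div_rpow hY hX, Real.rpow_sub_one hXp.ne']
    have : X^m ≠ 0 := by positivity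
    field_simp
  have hXm : 0 < X^m := by positivity
  have e3 : (X^2 + (m-1)*Y^2)^(m/2) - (a * X^m + b * X * Y^(m-1)) =
      X^m * ((1 + (m-1)*(Y/X)^2)^(m/2) - b * ((Y/X)^2)^((m-1)/2) - a) := by
    rw [e1, mul_assoc b, e2]; ring
  have hiff : X = α * Y ↔ (Y/X)^2 = (α^2)⁻¹ := by
    rw [← inv_pow, pow_left_inj₀ (by positivity) (by positivity) two_ne_zero]
    rw [div_eq_iff hXp.ne']
    constructor
    · intro h; rw [h]; field_simp
    · intro h; rw [h]; field_simp
  rw [hiff]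
  by_cases hE : (Y/X)^2 = (α^2)⁻¹
  · rw [hE, hGa] at e3
    have : (X^2 + (m-1)*Y^2)^(m/2) = a * X^m + b * X * Y^(m-1) := by
      rw [← sub_eq_zero, e3]; ring
    exact ⟨this.ge, fun _ => hE, fun _ => this⟩
  · have h := main _ (by positivity) hE
    have h5 := mul_pos hXm (sub_pos.2 h)
    rw [← e3, sub_pos] at h5
    exact ⟨h5.le, fun h => absurd h h5.ne', fun h => absurd h hE⟩
end

section
/- Let n ≥ 2 be an integer and let 0 ≤ α ≤ 1 be a real number. Set a = (n−1)(α² + n − 1)^{(n−2)/2}(1 − α²) and b = n·α·(α² + n − 1)^{(n−2)/2}. Then for all real X, Y ≥ 0 one has (X² + (n−1)Y²)^{n/2} ≥ a·Y^n + b·X·Y^{n−1}, with equality if and only if X = α·Y. -/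
/-- Lemma 10.2.
Let `n ≥ 2` and `0 ≤ α ≤ 1`.  With
`a = (n-1)(α² + n - 1)^((n-2)/2)(1 - α²)` and `b = n α (α² + n - 1)^((n-2)/2)`,
for all `X, Y ≥ 0` one has `(X² + (n-1)Y²)^(n/2) ≥ a Y^n + b X Y^(n-1)`,
with equality iff `X = α Y`. -/
theorem stmt2 (n : ℕ) (hn : 2 ≤ n) (α : ℝ) (hα0 : 0 ≤ α) (hα1 : α ≤ 1)
    (a b : ℝ)
    (ha : a = ((n : ℝ) - 1) * (α ^ 2 + (n : ℝ) - 1) ^ (((n : ℝ) - 2) / 2) * (1 - α ^ 2))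
    (hb : b = (n : ℝ) * α * (α ^ 2 + (n : ℝ) - 1) ^ (((n : ℝ) - 2) / 2)) :
    ∀ X Y : ℝ, 0 ≤ X → 0 ≤ Y →
      ((X ^ 2 + ((n : ℝ) - 1) * Y ^ 2) ^ ((n : ℝ) / 2) ≥
          a * Y ^ (n : ℝ) + b * X * Y ^ ((n : ℝ) - 1)) ∧
      ((X ^ 2 + ((n : ℝ) - 1) * Y ^ 2) ^ ((n : ℝ) / 2) =
          a * Y ^ (n : ℝ) + b * X * Y ^ ((n : ℝ) - 1) ↔ X = α * Y) := by
  intro X Y hX hY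
  have hn' : (2 : ℝ) ≤ n := by exact_mod_cast hn
  rcases hY.eq_or_lt with h0 | hY
  · subst h0
    rw [Real.zero_rpow (by linarith), Real.zero_rpow (by linarith)]
    simp only [mul_zero, add_zero, ne_eq, OfNat.ofNat_ne_zero, not_false_eq_true, zero_pow]
    refine ⟨by positivity, ?_⟩
    rw [Real.rpow_eq_zero (by positivity) (by linarith)]
    simp
  · have hc : 0 < α ^ 2 + (n : ℝ) - 1 := by nlinarith [sq_nonneg α]
    set c := α ^ 2 + (n : ℝ) - 1 with hcdef
    set K := c ^ (((n : ℝ) - 2) / 2) with hK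
    have hKpos : 0 < K := Real.rpow_pos_of_pos hc _
    set Z := Y ^ ((n : ℝ) - 2) with hZ
    have hZpos : 0 < Z := Real.rpow_pos_of_pos hY _
    have e1 : Y ^ ((n : ℝ) - 1) = Z * Y := by
      rw [hZ, ← Real.rpow_add_one hY.ne']; congr 1; ring
    have e2 : Y ^ (n : ℝ) = Z * Y ^ 2 := by
      rw [hZ, ← Real.rpow_two, ← Real.rpow_add hY]; congr 1; ring
    have e3 : (c * Y ^ 2) ^ ((n : ℝ) / 2) = K * Z * (c * Y ^ 2) := by
      have h1 : (n : ℝ) / 2 = ((n : ℝ) - 2) / 2 + 1 := by ring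
      have h2 : (Y ^ 2) ^ (((n : ℝ) - 2) / 2) = Z := by
        rw [← Real.rpow_two, ← Real.rpow_mul hY.le, hZ]; congr 1; ring
      rw [h1, Real.rpow_add_one (by positivity), Real.mul_rpow hc.le (by positivity), h2]
    have hC : 0 < c * Y ^ 2 := by positivity
    set U := X ^ 2 + ((n : ℝ) - 1) * Y ^ 2 with hU
    have hU0 : 0 ≤ U := by
      have : 0 ≤ (n : ℝ) - 1 := by linarith
      positivity
    have hB : K * Z * (c * Y ^ 2 + (n : ℝ) / 2 * (U - c * Y ^ 2)) ≤ U ^ ((n : ℝ) / 2) := by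
      have hb := one_add_mul_self_le_rpow_one_add (s := U / (c * Y ^ 2) - 1)
        (by have : 0 ≤ U / (c * Y ^ 2) := by positivity
            linarith) (p := (n : ℝ) / 2) (by linarith)
      rw [add_sub_cancel, Real.div_rpow hU0 hC.le, e3, le_div_iff₀ (by positivity)] at hb
      refine le_trans (le_of_eq ?_) hb
      field_simp
    have key : K * Z * (c * Y ^ 2 + (n : ℝ) / 2 * (U - c * Y ^ 2)) =
        a * Y ^ (n : ℝ) + b * X * Y ^ ((n : ℝ) - 1)
          + K * Z * ((n : ℝ) / 2) * (X - α * Y) ^ 2 := by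
      rw [e1, e2, ha, hb, hU, hcdef]; ring
    have hpos : 0 < K * Z * ((n : ℝ) / 2) := by positivity
    refine ⟨?_, ?_, ?_⟩
    · nlinarith [mul_nonneg hpos.le (sq_nonneg (X - α * Y))]
    · intro h
      by_contra hne
      have : 0 < (X - α * Y) ^ 2 := by
        have := sub_ne_zero.2 hne
        positivity
      nlinarith [mul_pos hpos this]
    · intro h
      have hUC : U = c * Y ^ 2 := by rw [hU, hcdef, h]; ring
      rw [hUC, sub_self, h, sub_self] at key
      rw [hUC, e3, h]
      linarith
end

section
/- For every integer n ≥ 4 there exists a real number α with 1 < α < √((n−1)/(n−3)) such that (α² + n − 1)^{(n−2)/2} (α² − 1) = α^n. -/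
/-- For every integer `n ≥ 4` there exists `α` with `1 < α < √((n-1)/(n-3))`
satisfying `(α² + n - 1)^((n-2)/2) (α² - 1) = α^n`. -/
theorem stmt3 (n : ℕ) (hn : 4 ≤ n) :
    ∃ α : ℝ, 1 < α ∧ α < Real.sqrt (((n : ℝ) - 1) / ((n : ℝ) - 3)) ∧
      (α ^ 2 + (n : ℝ) - 1) ^ (((n : ℝ) - 2) / 2) * (α ^ 2 - 1) = α ^ (n : ℝ) := by
  have hN : (4 : ℝ) ≤ n := by exact_mod_cast hn
  generalize (n : ℝ) = N at hN ⊢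
  have h3 : 0 < N - 3 := by linarith
  set t : ℝ := (N - 1) / (N - 3) with ht
  have ht1 : 1 < t := by rw [ht, lt_div_iff₀ h3]; linarith
  have hs1 : 1 < Real.sqrt t := by
    rw [Real.lt_sqrt (by norm_num)]; linarith
  have hs2 : Real.sqrt t ^ 2 = t := Real.sq_sqrt (by linarith)
  let f : ℝ → ℝ := fun α => (α ^ 2 + N - 1) ^ ((N - 2) / 2) * (α ^ 2 - 1) - α ^ N
  have hc : Continuous f := by
    refine Continuous.sub (Continuous.mul (Continuous.rpow_const (by fun_prop) ?_) (by fun_prop))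
      (Continuous.rpow_const (by fun_prop) ?_)
    · intro x; right; linarith
    · intro x; right; linarith
  have h1 : f 1 < 0 := by simp [f]
  have h2 : 0 < f (Real.sqrt t) := by
    have e1 : t + N - 1 = t * (N - 2) := by rw [ht]; field_simp; ring
    have e2 : t - 1 = 2 / (N - 3) := by rw [ht]; field_simp; ring
    have e3 : Real.sqrt t ^ N = t ^ ((N - 2) / 2) * t := by
      rw [Real.sqrt_eq_rpow, ← Real.rpow_mul (by linarith)]
      rw [← Real.rpow_add_one (by linarith)]
      congr 1; ring
    simp only [f, hs2]
    rw [e3, e1, e2, Real.mul_rpow (by linarith) (by linarith)]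
    have hA : 0 < t ^ ((N - 2) / 2) := Real.rpow_pos_of_pos (by linarith) _
    have hB : N - 2 ≤ (N - 2) ^ ((N - 2) / 2) := by
      apply Real.self_le_rpow_of_one_le <;> linarith
    have hC : t < (N - 2) ^ ((N - 2) / 2) * (2 / (N - 3)) := by
      rw [ht, ← mul_div_assoc]
      apply div_lt_div_of_pos_right _ h3
      linarith
    rw [mul_assoc, sub_pos]
    exact mul_lt_mul_of_pos_left hC hA
  obtain ⟨x, hx, hfx⟩ := intermediate_value_Ioo hs1.le hc.continuousOn ⟨h1, h2⟩
  exact ⟨x, hx.1, hx.2, sub_eq_zero.mp hfx⟩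
end

section
/- Let n ≥ 2 be an integer and define Γ₊ : (−1,1) → ℝ by Γ₊(s) = ((1+s)/(1−s))^{1/n} · exp( ((2−n)/(n·√(n−1))) · arctan( s/√(n−1) ) ). Then: (i) Γ₊ is differentiable on (−1,1) with Γ₊'(s) = Γ₊(s) · (1+s²)/((1−s²)(s²+n−1)) > 0, so Γ₊ is strictly increasing; (ii) Γ₊ maps (−1,1) onto (0,∞), i.e. Γ₊(s) → 0 as s → −1⁺ and Γ₊(s) → ∞ as s → 1⁻; (iii) Γ₊(0) = 1 and Γ₊'(0) = 1/(n−1); (iv) Γ₊(−s) · Γ₊(s) = 1 for all s ∈ (−1,1). -/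
open Filter Topology

/-- The function `Γ₊` from the paper:
`Γ₊(s) = ((1+s)/(1-s))^(1/n) · exp( ((2-n)/(n√(n-1))) · arctan(s/√(n-1)) )`. -/
noncomputable def GammaPlus (n : ℕ) (s : ℝ) : ℝ :=
  ((1 + s) / (1 - s)) ^ ((1 : ℝ) / (n : ℝ)) *
    Real.exp (((2 - (n : ℝ)) / ((n : ℝ) * Real.sqrt ((n : ℝ) - 1))) *
      Real.arctan (s / Real.sqrt ((n : ℝ) - 1)))

theorem GP_pos (n : ℕ) {s : ℝ} (hs : s ∈ Set.Ioo (-1 : ℝ) 1) : 0 < GammaPlus n s := by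
  have h1 : 0 < 1 + s := by linarith [hs.1]
  have h2 : 0 < 1 - s := by linarith [hs.2]
  unfold GammaPlus
  positivity

theorem GP_deriv (n : ℕ) (hn : 2 ≤ n) {s : ℝ} (hs : s ∈ Set.Ioo (-1 : ℝ) 1) :
    HasDerivAt (GammaPlus n)
      (GammaPlus n s * (1 + s ^ 2) / ((1 - s ^ 2) * (s ^ 2 + (n : ℝ) - 1))) s := by
  have h1 : 0 < 1 + s := by linarith [hs.1]
  have h2 : 0 < 1 - s := by linarith [hs.2]
  have hn' : (2 : ℝ) ≤ n := by exact_mod_cast hn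
  have hm : (0 : ℝ) < (n : ℝ) - 1 := by linarith
  have hr : 0 < Real.sqrt ((n : ℝ) - 1) := Real.sqrt_pos.2 hm
  have hr2 : Real.sqrt ((n : ℝ) - 1) ^ 2 = (n : ℝ) - 1 := Real.sq_sqrt hm.le
  have hq : 0 < (1 + s) / (1 - s) := by positivity
  have d1 : HasDerivAt (fun x : ℝ => (1 + x) / (1 - x))
      ((1 * (1 - s) - (1 + s) * (-1)) / (1 - s) ^ 2) s :=
    ((hasDerivAt_id' s).const_add 1).div ((hasDerivAt_id' s).const_sub 1) h2.ne'
  have d2 := d1.rpow_const (p := (1 : ℝ) / (n : ℝ)) (Or.inl hq.ne')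
  have d3 := ((((hasDerivAt_id' s).div_const (Real.sqrt ((n : ℝ) - 1))).arctan).const_mul
    ((2 - (n : ℝ)) / ((n : ℝ) * Real.sqrt ((n : ℝ) - 1)))).exp
  have d4 := d2.mul d3
  refine HasDerivAt.congr_deriv d4 ?_
  rw [Real.rpow_sub_one hq.ne']
  unfold GammaPlus
  generalize Real.exp _ = E
  generalize ((1 + s) / (1 - s)) ^ ((1 : ℝ) / (n : ℝ)) = P
  have hrat : (2 - (n : ℝ)) / ((n : ℝ) * Real.sqrt ((n : ℝ) - 1)) *
      (1 / (1 + (s / Real.sqrt ((n : ℝ) - 1)) ^ 2) * (1 / Real.sqrt ((n : ℝ) - 1)))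
      = (2 - (n : ℝ)) / (n * (s ^ 2 + (n : ℝ) - 1)) := by
    have : s ^ 2 + (n : ℝ) - 1 = s ^ 2 + Real.sqrt ((n : ℝ) - 1) ^ 2 := by rw [hr2]; ring
    rw [this]
    generalize Real.sqrt ((n : ℝ) - 1) = r at *
    have : 0 < s ^ 2 + r ^ 2 := by positivity
    have : 0 < r ^ 2 + s ^ 2 := by positivity
    field_simp
    try ring
  rw [hrat]
  have h3 : s ^ 2 + (n : ℝ) - 1 ≠ 0 := by nlinarith [sq_nonneg s]
  have h4 : 1 - s ^ 2 = (1 + s) * (1 - s) := by ring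
  rw [h4]
  have hn0 : (n : ℝ) ≠ 0 := by linarith
  field_simp
  ring

theorem GP_mul (n : ℕ) {s : ℝ} (hs : s ∈ Set.Ioo (-1 : ℝ) 1) :
    GammaPlus n (-s) * GammaPlus n s = 1 := by
  have h1 : 0 < 1 + s := by linarith [hs.1]
  have h2 : 0 < 1 - s := by linarith [hs.2]
  have hq : 0 < (1 + s) / (1 - s) := by positivity
  unfold GammaPlus
  have e : (1 + -s) / (1 - -s) = ((1 + s) / (1 - s))⁻¹ := by
    rw [inv_div]; congr 1; ring
  rw [e, Real.inv_rpow hq.le, neg_div, Real.arctan_neg, mul_neg, Real.exp_neg]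
  have := (Real.rpow_pos_of_pos hq ((1 : ℝ) / n)).ne'
  field_simp

theorem GP_lim (n : ℕ) (hn : 2 ≤ n) :
    Tendsto (GammaPlus n) (nhdsWithin (-1) (Set.Ioi (-1 : ℝ))) (nhds 0) := by
  have hn0 : (0 : ℝ) < 1 / n := by positivity
  have hc : ContinuousAt (GammaPlus n) (-1) := by
    unfold GammaPlus
    refine ContinuousAt.mul (ContinuousAt.rpow_const ?_ (Or.inr hn0.le)) ?_
    · exact ContinuousAt.div (by fun_prop) (by fun_prop) (by norm_num)
    · have : Continuous fun s : ℝ => Real.arctan (s / Real.sqrt ((n : ℝ) - 1)) :=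
        Real.continuous_arctan.comp (by fun_prop)
      fun_prop
  have h0 : GammaPlus n (-1) = 0 := by
    unfold GammaPlus
    rw [add_neg_cancel, zero_div, Real.zero_rpow hn0.ne', zero_mul]
  have := hc.tendsto
  rw [h0] at this
  exact this.mono_left nhdsWithin_le_nhds

theorem GP_lim_top (n : ℕ) (hn : 2 ≤ n) :
    Tendsto (GammaPlus n) (nhdsWithin 1 (Set.Iio (1 : ℝ))) atTop := by
  have hmem : Set.Ioo (-1 : ℝ) 1 ∈ nhdsWithin 1 (Set.Iio (1 : ℝ)) :=
    Ioo_mem_nhdsLT (by norm_num)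
  have hneg : Tendsto (fun s : ℝ => -s) (nhdsWithin 1 (Set.Iio (1 : ℝ)))
      (nhdsWithin (-1) (Set.Ioi (-1 : ℝ))) := tendsto_neg_nhdsLT
  have h1 := (GP_lim n hn).comp hneg
  have h2 : Tendsto (GammaPlus n ∘ fun s : ℝ => -s) (nhdsWithin 1 (Set.Iio (1 : ℝ)))
      (nhdsWithin 0 (Set.Ioi 0)) := by
    refine tendsto_nhdsWithin_iff.2 ⟨h1, ?_⟩
    filter_upwards [hmem] with s hs
    exact GP_pos n ⟨by linarith [hs.2], by linarith [hs.1]⟩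
  refine (tendsto_inv_nhdsGT_zero.comp h2).congr' ?_
  filter_upwards [hmem] with s hs
  exact inv_eq_of_mul_eq_one_right (GP_mul n hs)

/-- Basic properties of `Γ₊`: its derivative formula and positivity (hence strict
monotonicity), that it maps `(-1,1)` onto `(0,∞)` (with the corresponding
one-sided limits), the values `Γ₊(0) = 1`, `Γ₊'(0) = 1/(n-1)`, and the
identity `Γ₊(-s)·Γ₊(s) = 1`. -/
theorem stmt4 (n : ℕ) (hn : 2 ≤ n) :
    (∀ s ∈ Set.Ioo (-1 : ℝ) 1,
        HasDerivAt (GammaPlus n)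
          (GammaPlus n s * (1 + s ^ 2) / ((1 - s ^ 2) * (s ^ 2 + (n : ℝ) - 1))) s ∧
        0 < GammaPlus n s * (1 + s ^ 2) / ((1 - s ^ 2) * (s ^ 2 + (n : ℝ) - 1))) ∧
    StrictMonoOn (GammaPlus n) (Set.Ioo (-1 : ℝ) 1) ∧
    GammaPlus n '' Set.Ioo (-1 : ℝ) 1 = Set.Ioi 0 ∧
    Tendsto (GammaPlus n) (nhdsWithin (-1) (Set.Ioi (-1 : ℝ))) (nhds 0) ∧
    Tendsto (GammaPlus n) (nhdsWithin 1 (Set.Iio (1 : ℝ))) atTop ∧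
    GammaPlus n 0 = 1 ∧
    deriv (GammaPlus n) 0 = 1 / ((n : ℝ) - 1) ∧
    ∀ s ∈ Set.Ioo (-1 : ℝ) 1, GammaPlus n (-s) * GammaPlus n s = 1 := by
  have hn' : (2 : ℝ) ≤ n := by exact_mod_cast hn
  have hpos : ∀ s ∈ Set.Ioo (-1 : ℝ) 1,
      0 < GammaPlus n s * (1 + s ^ 2) / ((1 - s ^ 2) * (s ^ 2 + (n : ℝ) - 1)) := by
    intro s hs
    have h0 := GP_pos n hs
    have h1 : 0 < 1 - s ^ 2 := by nlinarith [hs.1, hs.2]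
    have h2 : 0 < s ^ 2 + (n : ℝ) - 1 := by nlinarith [sq_nonneg s]
    positivity
  have hcont : ContinuousOn (GammaPlus n) (Set.Ioo (-1 : ℝ) 1) :=
    fun s hs => (GP_deriv n hn hs).continuousAt.continuousWithinAt
  have hzero : GammaPlus n 0 = 1 := by simp [GammaPlus]
  refine ⟨fun s hs => ⟨GP_deriv n hn hs, hpos s hs⟩, ?_, ?_, GP_lim n hn, GP_lim_top n hn,
    hzero, ?_, fun s hs => GP_mul n hs⟩
  · refine strictMonoOn_of_deriv_pos (convex_Ioo _ _) hcont ?_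
    intro s hs
    rw [interior_Ioo] at hs
    rw [(GP_deriv n hn hs).deriv]
    exact hpos s hs
  · apply Set.Subset.antisymm
    · rintro _ ⟨s, hs, rfl⟩
      exact GP_pos n hs
    · exact isPreconnected_Ioo.intermediate_value_Ioi
        (le_principal_iff.2 (Ioo_mem_nhdsGT (by norm_num)))
        (le_principal_iff.2 (Ioo_mem_nhdsLT (by norm_num))) hcont (GP_lim n hn) (GP_lim_top n hn)
  · rw [(GP_deriv n hn (by norm_num : (0 : ℝ) ∈ Set.Ioo (-1 : ℝ) 1)).deriv, hzero]
    norm_num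
end

section
/- Let n ≥ 2 be an integer, let u₊ : (0,∞) → (−1,1) be the inverse of Γ₊ (so Γ₊(u₊(t)) = t for all t > 0), and define H₊(t) = (1 + u₊(t)²/(n−1))^{(1/n) − (1/2)} · (1 − u₊(t)²)^{−1/n} for t > 0. Then: (i) H₊(1) = 1; (ii) H₊ is differentiable on (0,∞) and its elasticity satisfies t·H₊'(t) = u₊(t)·H₊(t) for all t > 0; (iii) H₊ solves the characteristic equation ( H₊(t)² + t²·H₊'(t)²/(n−1) )^{(n−2)/2} · ( H₊(t)² − t²·H₊'(t)² ) = 1 for all t > 0. -/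
theorem gp_eq (n : ℕ) (s : ℝ) (hs : s ∈ Set.Ioo (-1 : ℝ) 1) :
    GammaPlus n s = Real.exp (((Real.log (1 + s) - Real.log (1 - s)) * (1 / (n : ℝ))) +
      ((2 - (n : ℝ)) / ((n : ℝ) * Real.sqrt ((n : ℝ) - 1))) *
      Real.arctan (s / Real.sqrt ((n : ℝ) - 1))) := by
  obtain ⟨h1, h2⟩ := hs
  have ha : 0 < 1 + s := by linarith
  have hb : 0 < 1 - s := by linarith
  rw [GammaPlus, Real.rpow_def_of_pos (div_pos ha hb), Real.log_div ha.ne' hb.ne', Real.exp_add]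

theorem gp_deriv (n : ℕ) (hn : 2 ≤ n) (s : ℝ) (hs : s ∈ Set.Ioo (-1 : ℝ) 1) :
    HasDerivAt (GammaPlus n)
      (GammaPlus n s * ((1 + s ^ 2) / ((1 - s ^ 2) * ((n : ℝ) - 1 + s ^ 2)))) s := by
  have hn' : (2 : ℝ) ≤ n := by exact_mod_cast hn
  have hs' := hs
  obtain ⟨h1, h2⟩ := hs
  have ha : 0 < 1 + s := by linarith
  have hb : 0 < 1 - s := by linarith
  have hm : 0 < (n : ℝ) - 1 := by linarith
  have hr := Real.sqrt_pos.mpr hm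
  have hrr := Real.sq_sqrt hm.le
  have e1 : HasDerivAt (fun s : ℝ => Real.log (1 + s)) (1 / (1 + s)) s :=
    ((hasDerivAt_id s).const_add 1).log ha.ne'
  have e2 : HasDerivAt (fun s : ℝ => Real.log (1 - s)) (-1 / (1 - s)) s :=
    ((hasDerivAt_id s).const_sub 1).log hb.ne'
  have e3 := ((hasDerivAt_id s).div_const (Real.sqrt ((n : ℝ) - 1))).arctan
  have e4 := (((e1.sub e2).mul_const (1 / (n : ℝ))).add
    (e3.const_mul ((2 - (n : ℝ)) / ((n : ℝ) * Real.sqrt ((n : ℝ) - 1))))).exp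
  have e5 : GammaPlus n =ᶠ[nhds s] _ :=
    Filter.eventually_of_mem (Ioo_mem_nhds h1 h2) (fun x hx => gp_eq n x hx)
  refine (e4.congr_of_eventuallyEq e5).congr_deriv ?_
  rw [gp_eq n s hs']
  simp only [id, Pi.add_apply, Pi.sub_apply]
  congr 1
  generalize Real.sqrt ((n : ℝ) - 1) = r at *
  have hnr : (n : ℝ) = r ^ 2 + 1 := by linarith
  rw [hnr]
  have q1 : r ^ 2 + s ^ 2 ≠ 0 := by positivity
  have q2 : 1 - s ^ 2 ≠ 0 := by nlinarith
  have q3 : r ^ 2 + 1 ≠ 0 := by positivity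
  have q4 : r ^ 2 + 1 - 1 + s ^ 2 ≠ 0 := by simpa using q1
  have q5 : 1 + (s / r) ^ 2 ≠ 0 := by positivity
  have q6 : 1 + (s / r) ^ 2 = (r ^ 2 + s ^ 2) / r ^ 2 := by field_simp
  have q7 : r ^ 2 + 1 - 1 + s ^ 2 = r ^ 2 + s ^ 2 := by ring
  have q8 : 1 - s ^ 2 = (1 + s) * (1 - s) := by ring
  rw [q6, q7, q8]
  have := ha.ne'
  have := hb.ne'
  field_simp
  ring

theorem h_deriv (n : ℕ) (hn : 2 ≤ n) (s : ℝ) (hs : s ∈ Set.Ioo (-1 : ℝ) 1) :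
    HasDerivAt (fun s : ℝ => (1 + s ^ 2 / ((n : ℝ) - 1)) ^ ((1 : ℝ) / (n : ℝ) - 1 / 2) *
        (1 - s ^ 2) ^ (-(1 : ℝ) / (n : ℝ)))
      (s * ((1 + s ^ 2 / ((n : ℝ) - 1)) ^ ((1 : ℝ) / (n : ℝ) - 1 / 2) *
        (1 - s ^ 2) ^ (-(1 : ℝ) / (n : ℝ))) *
        ((1 + s ^ 2) / ((1 - s ^ 2) * ((n : ℝ) - 1 + s ^ 2)))) s := by
  have hn' : (2 : ℝ) ≤ n := by exact_mod_cast hn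
  obtain ⟨h1, h2⟩ := hs
  have hm : 0 < (n : ℝ) - 1 := by linarith
  have hA : 0 < 1 + s ^ 2 / ((n : ℝ) - 1) := by positivity
  have hB : 0 < 1 - s ^ 2 := by nlinarith
  have e0 : HasDerivAt (fun s : ℝ => s ^ 2) (2 * s) s := by simpa using hasDerivAt_pow 2 s
  have e1 := ((e0.div_const ((n : ℝ) - 1)).const_add 1).rpow_const
    (p := (1 : ℝ) / (n : ℝ) - 1 / 2) (Or.inl hA.ne')
  have e2 := (e0.const_sub 1).rpow_const (p := -(1 : ℝ) / (n : ℝ)) (Or.inl hB.ne')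
  refine (e1.mul e2).congr_deriv ?_
  rw [Real.rpow_sub_one hA.ne', Real.rpow_sub_one hB.ne']
  generalize (1 + s ^ 2 / ((n : ℝ) - 1)) ^ ((1 : ℝ) / (n : ℝ) - 1 / 2) = X
  generalize (1 - s ^ 2) ^ (-(1 : ℝ) / (n : ℝ)) = Y
  obtain ⟨m, hmm⟩ : ∃ m : ℝ, m = (n : ℝ) - 1 := ⟨_, rfl⟩
  have hnr : (n : ℝ) = m + 1 := by linarith
  rw [← hmm]
  have hm0 : 0 < m := by linarith
  rw [hnr]
  have q1 : m + s ^ 2 ≠ 0 := by positivity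
  have q3 : m + 1 ≠ 0 := by positivity
  have q6 : 1 + s ^ 2 / m = (m + s ^ 2) / m := by field_simp
  rw [q6]
  have := hB.ne'
  field_simp
  ring

/-- Let `u₊ : (0,∞) → (-1,1)` be the inverse of `Γ₊` and
`H₊(t) = (1 + u₊(t)²/(n-1))^(1/n - 1/2) · (1 - u₊(t)²)^(-1/n)`.
Then `H₊(1) = 1`, `H₊` is differentiable on `(0,∞)` with elasticity
`t H₊'(t) = u₊(t) H₊(t)`, and `H₊` satisfies the characteristic equation
`(H₊² + t²H₊'²/(n-1))^((n-2)/2) (H₊² - t²H₊'²) = 1`. -/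
theorem stmt5 (n : ℕ) (hn : 2 ≤ n) (u : ℝ → ℝ)
    (hu_mem : ∀ t : ℝ, 0 < t → u t ∈ Set.Ioo (-1 : ℝ) 1)
    (hu_inv : ∀ t : ℝ, 0 < t → GammaPlus n (u t) = t)
    (H : ℝ → ℝ)
    (hH : ∀ t : ℝ, 0 < t →
      H t = (1 + (u t) ^ 2 / ((n : ℝ) - 1)) ^ ((1 : ℝ) / (n : ℝ) - 1 / 2) *
        (1 - (u t) ^ 2) ^ (-(1 : ℝ) / (n : ℝ))) :
    H 1 = 1 ∧
    (∀ t : ℝ, 0 < t → DifferentiableAt ℝ H t ∧ t * deriv H t = u t * H t) ∧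
    (∀ t : ℝ, 0 < t →
      ((H t) ^ 2 + t ^ 2 * (deriv H t) ^ 2 / ((n : ℝ) - 1)) ^ (((n : ℝ) - 2) / 2) *
        ((H t) ^ 2 - t ^ 2 * (deriv H t) ^ 2) = 1) := by
  have hn' : (2 : ℝ) ≤ n := by exact_mod_cast hn
  have hm : 0 < (n : ℝ) - 1 := by linarith
  have gpos : ∀ s ∈ Set.Ioo (-1 : ℝ) 1, 0 < GammaPlus n s := fun s hs => by
    rw [gp_eq n s hs]; exact Real.exp_pos _
  have dpos : ∀ s ∈ Set.Ioo (-1 : ℝ) 1,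
      0 < ((1 + s ^ 2) / ((1 - s ^ 2) * ((n : ℝ) - 1 + s ^ 2))) := fun s hs => by
    have : 0 < 1 - s ^ 2 := by nlinarith [hs.1, hs.2]
    positivity
  have gmono : StrictMonoOn (GammaPlus n) (Set.Ioo (-1) 1) := by
    apply strictMonoOn_of_deriv_pos (convex_Ioo _ _)
    · exact fun s hs => (gp_deriv n hn s hs).continuousAt.continuousWithinAt
    · intro s hs
      rw [interior_Ioo] at hs
      rw [(gp_deriv n hn s hs).deriv]
      exact mul_pos (gpos s hs) (dpos s hs)
  have uinv : ∀ s ∈ Set.Ioo (-1 : ℝ) 1, u (GammaPlus n s) = s := fun s hs =>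
    gmono.injOn (hu_mem _ (gpos s hs)) hs (hu_inv _ (gpos s hs))
  have umono : StrictMonoOn u (Set.Ioi 0) := by
    intro a ha b hb hab
    rw [← gmono.lt_iff_lt (hu_mem a ha) (hu_mem b hb), hu_inv a ha, hu_inv b hb]
    exact hab
  have ucont : ∀ t : ℝ, 0 < t → ContinuousAt u t := by
    intro t ht
    apply umono.continuousAt_of_image_mem_nhds (Ioi_mem_nhds ht)
    refine Filter.mem_of_superset (Ioo_mem_nhds (hu_mem t ht).1 (hu_mem t ht).2) ?_
    intro s hs
    exact ⟨_, gpos s hs, uinv s hs⟩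
  have hder : ∀ t : ℝ, 0 < t → HasDerivAt H (u t * H t / t) t := by
    intro t ht
    have hs := hu_mem t ht
    have d := gp_deriv n hn _ hs
    rw [hu_inv t ht] at d
    have dp := dpos _ hs
    have du := HasDerivAt.of_local_left_inverse (ucont t ht) d (mul_pos ht dp).ne'
      (Filter.eventually_of_mem (Ioi_mem_nhds ht) (fun x hx => hu_inv x hx))
    have dH := (h_deriv n hn _ hs).comp t du
    refine (dH.congr_of_eventuallyEq (Filter.eventually_of_mem (Ioi_mem_nhds ht)
      (fun x hx => hH x hx))).congr_deriv ?_
    rw [← hH t ht]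
    generalize ((1 + (u t) ^ 2) / ((1 - (u t) ^ 2) * ((n : ℝ) - 1 + (u t) ^ 2))) = k at *
    field_simp
  have hel : ∀ t : ℝ, 0 < t → t * deriv H t = u t * H t := by
    intro t ht
    rw [(hder t ht).deriv]
    field_simp
  refine ⟨?_, fun t ht => ⟨(hder t ht).differentiableAt, hel t ht⟩, ?_⟩
  · have h0 : u 1 = 0 := by
      have := uinv 0 (by norm_num)
      simpa [GammaPlus] using this
    rw [hH 1 one_pos, h0]; simp
  · intro t ht
    rw [← mul_pow, hel t ht]
    have hs := hu_mem t ht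
    have hA : 0 < 1 + u t ^ 2 / ((n : ℝ) - 1) := by positivity
    have hB : 0 < 1 - u t ^ 2 := by nlinarith [hs.1, hs.2]
    have k1 : H t ^ 2 + (u t * H t) ^ 2 / ((n : ℝ) - 1) =
        H t ^ 2 * (1 + u t ^ 2 / ((n : ℝ) - 1)) := by ring
    have k2 : H t ^ 2 - (u t * H t) ^ 2 = H t ^ 2 * (1 - u t ^ 2) := by ring
    rw [k1, k2, hH t ht]
    obtain ⟨a, ha⟩ : ∃ a, Real.exp a = 1 + u t ^ 2 / ((n : ℝ) - 1) := ⟨_, Real.exp_log hA⟩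
    obtain ⟨b, hb⟩ : ∃ b, Real.exp b = 1 - u t ^ 2 := ⟨_, Real.exp_log hB⟩
    rw [← ha, ← hb]
    simp only [← Real.exp_mul, ← Real.exp_add, ← Real.exp_nat_mul]
    rw [Real.exp_eq_one_iff]
    have : (n : ℝ) ≠ 0 := by positivity
    push_cast
    field_simp
    ring
end

section
/- Let n ≥ 2 be an integer, u₊ : (0,∞) → (−1,1) the inverse of Γ₊, and H₊(t) = (1 + u₊(t)²/(n−1))^{(1/n) − (1/2)} · (1 − u₊(t)²)^{−1/n}. Then: (i) H₊(1/t) = H₊(t) for all t > 0; (ii) H₊(t) ≥ 1 for all t > 0; (iii) H₊ is strictly convex on (0,∞). -/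
noncomputable def LL (n : ℕ) (s : ℝ) : ℝ :=
  (1 / (n : ℝ)) * (Real.log (1 + s) - Real.log (1 - s)) +
    ((2 - (n : ℝ)) / ((n : ℝ) * Real.sqrt ((n : ℝ) - 1))) *
      Real.arctan (s / Real.sqrt ((n : ℝ) - 1))

noncomputable def hh (n : ℕ) (s : ℝ) : ℝ :=
  (1 / (n : ℝ) - 1 / 2) * Real.log (1 + s ^ 2 / ((n : ℝ) - 1)) -
    (1 / (n : ℝ)) * Real.log (1 - s ^ 2)

noncomputable def dL (n : ℕ) (s : ℝ) : ℝ := (1 + s ^ 2) / ((1 - s ^ 2) * ((n : ℝ) - 1 + s ^ 2))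

theorem gamma_eq (n : ℕ) {s : ℝ} (hs : s ∈ Set.Ioo (-1 : ℝ) 1) :
    GammaPlus n s = Real.exp (LL n s) := by
  obtain ⟨h1, h2⟩ := hs
  have a : 0 < 1 + s := by linarith
  have b : 0 < 1 - s := by linarith
  unfold GammaPlus LL
  rw [Real.exp_add, Real.rpow_def_of_pos (div_pos a b), Real.log_div a.ne' b.ne', mul_comm (1 / (n : ℝ))]

theorem hh_eq (n : ℕ) (hn : 2 ≤ n) {s : ℝ} (hs : s ∈ Set.Ioo (-1 : ℝ) 1) :
    (1 + s ^ 2 / ((n : ℝ) - 1)) ^ ((1 : ℝ) / (n : ℝ) - 1 / 2) *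
        (1 - s ^ 2) ^ (-(1 : ℝ) / (n : ℝ)) = Real.exp (hh n s) := by
  obtain ⟨h1, h2⟩ := hs
  have hn' : (2 : ℝ) ≤ n := by exact_mod_cast hn
  have m : 0 < (n : ℝ) - 1 := by linarith
  have a : 0 < 1 - s ^ 2 := by nlinarith
  have b : 0 < 1 + s ^ 2 / ((n : ℝ) - 1) := by positivity
  unfold hh
  rw [Real.rpow_def_of_pos a, Real.rpow_def_of_pos b, ← Real.exp_add]
  congr 1
  ring

theorem LL_deriv (n : ℕ) (hn : 2 ≤ n) {s : ℝ} (hs : s ∈ Set.Ioo (-1 : ℝ) 1) :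
    HasDerivAt (LL n) (dL n s) s := by
  obtain ⟨h1, h2⟩ := hs
  have hn' : (2 : ℝ) ≤ n := by exact_mod_cast hn
  have m : 0 < (n : ℝ) - 1 := by linarith
  have a : 0 < 1 + s := by linarith
  have b : 0 < 1 - s := by linarith
  have c : 0 < 1 - s ^ 2 := by nlinarith
  have q : 0 < Real.sqrt ((n : ℝ) - 1) := Real.sqrt_pos.mpr m
  have q2 : Real.sqrt ((n : ℝ) - 1) ^ 2 = (n : ℝ) - 1 := Real.sq_sqrt m.le
  have d1 := ((hasDerivAt_id' s).const_add 1).log a.ne'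
  have d2 := ((hasDerivAt_id' s).const_sub 1).log b.ne'
  have d3 := ((hasDerivAt_id' s).div_const (Real.sqrt ((n : ℝ) - 1))).arctan
  have := ((d1.sub d2).const_mul (1 / (n : ℝ))).add
    (d3.const_mul ((2 - (n : ℝ)) / ((n : ℝ) * Real.sqrt ((n : ℝ) - 1))))
  refine this.congr_deriv ?_
  unfold dL
  generalize Real.sqrt ((n : ℝ) - 1) = r at *
  have hnr : (n : ℝ) = r ^ 2 + 1 := by linarith
  have e : (1 - s ^ 2) = (1 + s) * (1 - s) := by ring
  rw [e, hnr]
  have : r ^ 2 + 1 - 1 + s ^ 2 ≠ 0 := by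
    have : 0 < r ^ 2 + 1 - 1 + s ^ 2 := by nlinarith [sq_nonneg s]
    exact this.ne'
  have : r ^ 2 + s ^ 2 ≠ 0 := by positivity
  have : 1 + (s / r) ^ 2 ≠ 0 := by positivity
  field_simp
  ring

theorem hh_deriv (n : ℕ) (hn : 2 ≤ n) {s : ℝ} (hs : s ∈ Set.Ioo (-1 : ℝ) 1) :
    HasDerivAt (hh n) (s * dL n s) s := by
  obtain ⟨h1, h2⟩ := hs
  have hn' : (2 : ℝ) ≤ n := by exact_mod_cast hn
  have m : 0 < (n : ℝ) - 1 := by linarith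
  have a : 0 < 1 - s ^ 2 := by nlinarith
  have b : 0 < 1 + s ^ 2 / ((n : ℝ) - 1) := by positivity
  have p := hasDerivAt_pow 2 s
  have d1 := ((p.div_const ((n : ℝ) - 1)).const_add 1).log b.ne'
  have d2 := (p.const_sub 1).log a.ne'
  have := (d1.const_mul (1 / (n : ℝ) - 1 / 2)).sub (d2.const_mul (1 / (n : ℝ)))
  refine this.congr_deriv ?_
  unfold dL
  have : 0 < (n : ℝ) - 1 + s ^ 2 := by positivity
  generalize hM : (n : ℝ) - 1 = M at *
  have hnr : (n : ℝ) = M + 1 := by linarith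
  rw [hnr]
  have : M + 1 ≠ 0 := by positivity
  field_simp
  ring

theorem dL_pos (n : ℕ) (hn : 2 ≤ n) {s : ℝ} (hs : s ∈ Set.Ioo (-1 : ℝ) 1) : 0 < dL n s := by
  obtain ⟨h1, h2⟩ := hs
  have hn' : (2 : ℝ) ≤ n := by exact_mod_cast hn
  have m : 0 < (n : ℝ) - 1 := by linarith
  have a : 0 < 1 - s ^ 2 := by nlinarith
  unfold dL
  positivity

theorem LL_mono (n : ℕ) (hn : 2 ≤ n) : StrictMonoOn (LL n) (Set.Ioo (-1 : ℝ) 1) := by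
  apply strictMonoOn_of_deriv_pos (convex_Ioo _ _)
  · exact fun s hs => (LL_deriv n hn hs).continuousAt.continuousWithinAt
  · intro s hs
    rw [interior_Ioo] at hs
    rw [(LL_deriv n hn hs).deriv]
    exact dL_pos n hn hs

theorem G_mono (n : ℕ) (hn : 2 ≤ n) :
    StrictMonoOn (fun s => s * Real.exp (hh n s - LL n s)) (Set.Ioo (-1 : ℝ) 1) := by
  have D : ∀ s ∈ Set.Ioo (-1 : ℝ) 1, HasDerivAt (fun s => s * Real.exp (hh n s - LL n s))
      (Real.exp (hh n s - LL n s) * (1 - s * (1 - s) * dL n s)) s := by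
    intro s hs
    have := (hasDerivAt_id' s).mul ((hh_deriv n hn hs).sub (LL_deriv n hn hs)).exp
    refine this.congr_deriv ?_
    simp only [Pi.sub_apply]
    ring
  apply strictMonoOn_of_deriv_pos (convex_Ioo _ _)
  · exact fun s hs => (D s hs).continuousAt.continuousWithinAt
  · intro s hs
    rw [interior_Ioo] at hs
    rw [(D s hs).deriv]
    apply mul_pos (Real.exp_pos _)
    obtain ⟨h1, h2⟩ := hs
    have hn' : (2 : ℝ) ≤ n := by exact_mod_cast hn
    have m : 0 < (n : ℝ) - 1 := by linarith
    have a : 0 < 1 - s ^ 2 := by nlinarith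
    have k : 0 < (n : ℝ) - 1 + s ^ 2 := by positivity
    unfold dL
    rw [sub_pos, ← mul_div_assoc, div_lt_one (by positivity)]
    have b : 0 < 1 - s := by linarith
    have c : 0 < 1 + s := by linarith
    have key : s * (1 + s ^ 2) < (1 + s) * ((n : ℝ) - 1 + s ^ 2) := by
      nlinarith [mul_nonneg c.le (sub_nonneg.mpr hn'), sq_nonneg s]
    nlinarith [mul_lt_mul_of_pos_left key b]

/-- With `u₊` the inverse of `Γ₊` and
`H₊(t) = (1 + u₊(t)²/(n-1))^(1/n - 1/2) · (1 - u₊(t)²)^(-1/n)` one has the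
symmetry `H₊(1/t) = H₊(t)`, the lower bound `H₊(t) ≥ 1`, and strict convexity
of `H₊` on `(0,∞)`. -/
theorem stmt6 (n : ℕ) (hn : 2 ≤ n) (u : ℝ → ℝ)
    (hu_mem : ∀ t : ℝ, 0 < t → u t ∈ Set.Ioo (-1 : ℝ) 1)
    (hu_inv : ∀ t : ℝ, 0 < t → GammaPlus n (u t) = t)
    (H : ℝ → ℝ)
    (hH : ∀ t : ℝ, 0 < t →
      H t = (1 + (u t) ^ 2 / ((n : ℝ) - 1)) ^ ((1 : ℝ) / (n : ℝ) - 1 / 2) *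
        (1 - (u t) ^ 2) ^ (-(1 : ℝ) / (n : ℝ))) :
    (∀ t : ℝ, 0 < t → H (1 / t) = H t) ∧
    (∀ t : ℝ, 0 < t → 1 ≤ H t) ∧
    StrictConvexOn ℝ (Set.Ioi (0 : ℝ)) H := by
  have L0 : ∀ t : ℝ, 0 < t → LL n (u t) = Real.log t := by
    intro t ht
    have := hu_inv t ht
    rw [gamma_eq n (hu_mem t ht)] at this
    have h2 := congrArg Real.log this
    rwa [Real.log_exp] at h2
  have HE : ∀ t : ℝ, 0 < t → H t = Real.exp (hh n (u t)) := fun t ht => by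
    rw [hH t ht, hh_eq n hn (hu_mem t ht)]
  have left : ∀ s ∈ Set.Ioo (-1 : ℝ) 1, u (Real.exp (LL n s)) = s := by
    intro s hs
    apply (LL_mono n hn).injOn (hu_mem _ (Real.exp_pos _)) hs
    rw [L0 _ (Real.exp_pos _), Real.log_exp]
  have umono : StrictMonoOn u (Set.Ioi 0) := by
    intro a ha b hb hab
    rw [← (LL_mono n hn).lt_iff_lt (hu_mem a ha) (hu_mem b hb), L0 a ha, L0 b hb]
    exact Real.log_lt_log ha hab
  have ucont : ∀ t : ℝ, 0 < t → ContinuousAt u t := by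
    intro t ht
    apply umono.continuousAt_of_image_mem_nhds (Ioi_mem_nhds ht)
    apply Filter.mem_of_superset (isOpen_Ioo.mem_nhds (hu_mem t ht))
    intro s hs
    exact ⟨_, Real.exp_pos _, left s hs⟩
  have uder : ∀ t : ℝ, 0 < t → HasDerivAt u (t * dL n (u t))⁻¹ t := by
    intro t ht
    have hE : Real.exp (LL n (u t)) = t := by rw [L0 t ht, Real.exp_log ht]
    have d := (LL_deriv n hn (hu_mem t ht)).exp
    rw [hE] at d
    refine d.of_local_left_inverse (ucont t ht)
      (mul_pos ht (dL_pos n hn (hu_mem t ht))).ne' ?_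
    filter_upwards [Ioi_mem_nhds ht] with y hy
    rw [L0 y hy, Real.exp_log hy]
  have Hder : ∀ t : ℝ, 0 < t →
      HasDerivAt H (u t * Real.exp (hh n (u t) - LL n (u t))) t := by
    intro t ht
    have d := ((hh_deriv n hn (hu_mem t ht)).comp t (uder t ht)).exp
    have d' : HasDerivAt H _ t := d.congr_of_eventuallyEq (by
      filter_upwards [Ioi_mem_nhds ht] with y hy
      exact HE y hy)
    refine d'.congr_deriv ?_
    have := (dL_pos n hn (hu_mem t ht)).ne'
    rw [Real.exp_sub, L0 t ht, Real.exp_log ht]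
    simp only [Function.comp]
    field_simp
  refine ⟨?_, ?_, ?_⟩
  · intro t ht
    have ht' : 0 < 1 / t := by positivity
    have neg : u (1 / t) = - u t := by
      have hm : - u t ∈ Set.Ioo (-1 : ℝ) 1 := by
        obtain ⟨h1, h2⟩ := hu_mem t ht
        constructor <;> linarith
      apply (LL_mono n hn).injOn (hu_mem _ ht') hm
      have odd : LL n (- u t) = - LL n (u t) := by
        unfold LL
        rw [neg_div, Real.arctan_neg, sub_neg_eq_add, ← sub_eq_add_neg]
        ring
      rw [odd, L0 _ ht', L0 t ht, one_div, Real.log_inv]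
    rw [hH _ ht', hH t ht, neg, neg_sq]
  · intro t ht
    rw [HE t ht, Real.one_le_exp_iff]
    obtain ⟨h1, h2⟩ := hu_mem t ht
    generalize u t = s at *
    have hn' : (2 : ℝ) ≤ n := by exact_mod_cast hn
    have m : 0 < (n : ℝ) - 1 := by linarith
    have a : 0 < 1 - s ^ 2 := by nlinarith
    have b : 0 < 1 + s ^ 2 / ((n : ℝ) - 1) := by positivity
    have e1 := Real.log_le_sub_one_of_pos a
    have e2 := Real.log_le_sub_one_of_pos b
    have c1 : 0 ≤ 1 / 2 - 1 / (n : ℝ) := by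
      rw [sub_nonneg]
      exact one_div_le_one_div_of_le (by norm_num) hn'
    have c2 : 0 ≤ 1 / (n : ℝ) := by positivity
    have f1 := mul_le_mul_of_nonneg_left e1 c2
    have f2 := mul_le_mul_of_nonneg_left e2 c1
    have f3 : (1 / 2 - 1 / (n : ℝ)) * (1 + s ^ 2 / ((n : ℝ) - 1) - 1) ≤ 1 / (n : ℝ) * s ^ 2 := by
      have : 1 / (n : ℝ) * s ^ 2 - (1 / 2 - 1 / (n : ℝ)) * (1 + s ^ 2 / ((n : ℝ) - 1) - 1)
          = s ^ 2 / (2 * ((n : ℝ) - 1)) := by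
        have : (n : ℝ) ≠ 0 := by positivity
        have := m.ne'
        field_simp
        ring
      have : 0 ≤ s ^ 2 / (2 * ((n : ℝ) - 1)) := by positivity
      linarith
    unfold hh
    linarith
  · apply StrictMonoOn.strictConvexOn_of_deriv (convex_Ioi 0)
    · exact fun t ht => (Hder t ht).continuousAt.continuousWithinAt
    · rw [interior_Ioi]
      intro a ha b hb hab
      rw [(Hder a ha).deriv, (Hder b hb).deriv]
      exact G_mono n hn (hu_mem a ha) (hu_mem b hb) (umono ha hb hab)
end

section
/- Let n ≥ 2 be an integer, u₊ : (0,∞) → (−1,1) the inverse of Γ₊, H₊(t) = (1 + u₊(t)²/(n−1))^{(1/n) − (1/2)} · (1 − u₊(t)²)^{−1/n}, and Θ₊ = (1 − 1/n)^{(n−2)/(2n)} · 4^{−1/n} · exp( ((n−2)/(n·√(n−1))) · arctan( 1/√(n−1) ) ). Then lim_{t→∞} H₊(t)/t = Θ₊ and lim_{t→0⁺} t·H₊(t) = Θ₊; moreover there exists a constant C > 0 such that 0 < H₊(t) − Θ₊·t ≤ C·t^{1−n} for all t ≥ 1. -/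
open Filter Topology

open Real in
noncomputable def auxLG (n : ℕ) (s : ℝ) : ℝ :=
  (1 / (n:ℝ)) * (log (1 + s) - log (1 - s)) -
    (((n:ℝ) - 2) / ((n : ℝ) * √((n : ℝ) - 1))) * arctan (s / √((n : ℝ) - 1))

open Real in
noncomputable def auxLF (n : ℕ) (s : ℝ) : ℝ :=
  (1 / (n:ℝ) - 1 / 2) * log (1 + s ^ 2 / ((n:ℝ) - 1)) - (2 / (n:ℝ)) * log (1 + s) +
    (((n:ℝ) - 2) / ((n : ℝ) * √((n : ℝ) - 1))) * arctan (s / √((n : ℝ) - 1))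

open Real in
noncomputable def auxh (n : ℕ) (s : ℝ) : ℝ :=
  (1 + s ^ 2 / ((n : ℝ) - 1)) ^ ((1 : ℝ) / (n : ℝ) - 1 / 2) *
        (1 - s ^ 2) ^ (-(1 : ℝ) / (n : ℝ))

lemma aux_Gamma (n : ℕ) (s : ℝ) (h1 : -1 < s) (h2 : s < 1) :
    GammaPlus n s = Real.exp (auxLG n s) := by
  have a1 : 0 < 1 + s := by linarith
  have a2 : 0 < 1 - s := by linarith
  unfold GammaPlus auxLG
  rw [Real.rpow_def_of_pos (div_pos a1 a2), ← Real.exp_add, Real.log_div a1.ne' a2.ne']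
  congr 1
  ring

lemma aux_Gamma_neg (n : ℕ) (s : ℝ) : auxLG n (-s) = - auxLG n s := by
  unfold auxLG
  rw [neg_div, Real.arctan_neg, sub_neg_eq_add, ← sub_eq_add_neg]
  ring

lemma aux_h (n : ℕ) (hn : 2 ≤ n) (s : ℝ) (h1 : -1 < s) (h2 : s < 1) :
    auxh n s = Real.exp (auxLF n s + auxLG n s) := by
  have a1 : 0 < 1 + s := by linarith
  have a2 : 0 < 1 - s := by linarith
  have hn' : (2:ℝ) ≤ n := by exact_mod_cast hn
  have hm : 0 < (n:ℝ) - 1 := by linarith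
  have a3 : 0 < 1 + s ^ 2 / ((n:ℝ) - 1) := by positivity
  have a4 : 1 - s ^ 2 = (1 + s) * (1 - s) := by ring
  unfold auxh auxLF auxLG
  rw [a4, Real.rpow_def_of_pos a3, Real.rpow_def_of_pos (mul_pos a1 a2), ← Real.exp_add,
    Real.log_mul a1.ne' a2.ne']
  congr 1
  ring

lemma aux_Theta (n : ℕ) (hn : 2 ≤ n) :
    (1 - 1 / (n : ℝ)) ^ (((n : ℝ) - 2) / (2 * (n : ℝ))) *
        (4 : ℝ) ^ (-(1 : ℝ) / (n : ℝ)) *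
        Real.exp ((((n : ℝ) - 2) / ((n : ℝ) * Real.sqrt ((n : ℝ) - 1))) *
          Real.arctan (1 / Real.sqrt ((n : ℝ) - 1))) = Real.exp (auxLF n 1) := by
  have hn' : (2:ℝ) ≤ n := by exact_mod_cast hn
  have hn0 : (0:ℝ) < n := by linarith
  have hm : 0 < (n:ℝ) - 1 := by linarith
  have e1 : 1 - 1 / (n:ℝ) = (1 + 1 ^ 2 / ((n:ℝ) - 1))⁻¹ := by
    field_simp
    ring
  have a3 : 0 < 1 + 1 ^ 2 / ((n:ℝ) - 1) := by positivity
  have l4 : Real.log 4 = 2 * Real.log (1 + 1) := by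
    rw [show (4:ℝ) = (1 + 1) ^ 2 by norm_num, Real.log_pow]; norm_num
  unfold auxLF
  rw [e1, Real.rpow_def_of_pos (inv_pos.2 a3), Real.rpow_def_of_pos (by norm_num : (0:ℝ) < 4),
    ← Real.exp_add, ← Real.exp_add, Real.log_inv, l4]
  congr 1
  field_simp
  ring

lemma aux_LF_deriv (n : ℕ) (hn : 2 ≤ n) (s : ℝ) (h1 : -1 < s) :
    HasDerivAt (auxLF n) (-((1 + s ^ 2) / (((n:ℝ) - 1 + s ^ 2) * (1 + s)))) s := by
  have a1 : 0 < 1 + s := by linarith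
  have hn' : (2:ℝ) ≤ n := by exact_mod_cast hn
  have hn0 : (0:ℝ) < n := by linarith
  have hm : 0 < (n:ℝ) - 1 := by linarith
  have a3 : 0 < 1 + s ^ 2 / ((n:ℝ) - 1) := by positivity
  have a5 : 0 < (n:ℝ) - 1 + s ^ 2 := by positivity
  have ha : 0 < √((n:ℝ) - 1) := Real.sqrt_pos.2 hm
  have hsq : √((n:ℝ) - 1) ^ 2 = (n:ℝ) - 1 := Real.sq_sqrt hm.le
  have d1 := ((((hasDerivAt_id s).pow 2).div_const ((n:ℝ) - 1)).const_add 1).log a3.ne'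
  have d2 := ((hasDerivAt_id s).const_add 1).log a1.ne'
  have d3 := ((hasDerivAt_id s).div_const (√((n:ℝ) - 1))).arctan
  have d := ((d1.const_mul (1 / (n:ℝ) - 1 / 2)).sub (d2.const_mul (2 / (n:ℝ)))).add
    (d3.const_mul (((n:ℝ) - 2) / ((n : ℝ) * √((n : ℝ) - 1))))
  refine d.congr_deriv ?_
  simp only [id, Pi.pow_apply]
  have e1 : 1 + s ^ 2 / ((n:ℝ) - 1) = ((n:ℝ) - 1 + s ^ 2) / ((n:ℝ) - 1) := by field_simp
  have e2 : ((n:ℝ) - 2) / ((n : ℝ) * √((n : ℝ) - 1)) *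
      (1 / (1 + (s / √((n:ℝ) - 1)) ^ 2) * (1 / √((n:ℝ) - 1))) =
      ((n:ℝ) - 2) / ((n:ℝ) * ((n:ℝ) - 1 + s ^ 2)) := by
    rw [div_pow, hsq, e1]
    generalize √((n:ℝ) - 1) = a at *
    rw [← hsq] at a5 ⊢
    field_simp
  rw [e2, e1]
  push_cast
  field_simp
  ring

lemma aux_LG_deriv (n : ℕ) (hn : 2 ≤ n) (s : ℝ) (h1 : -1 < s) (h2 : s < 1) :
    HasDerivAt (auxLG n) ((1 + s ^ 2) / (((n:ℝ) - 1 + s ^ 2) * ((1 + s) * (1 - s)))) s := by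
  have a1 : 0 < 1 + s := by linarith
  have a2 : 0 < 1 - s := by linarith
  have hn' : (2:ℝ) ≤ n := by exact_mod_cast hn
  have hn0 : (0:ℝ) < n := by linarith
  have hm : 0 < (n:ℝ) - 1 := by linarith
  have a3 : 0 < 1 + s ^ 2 / ((n:ℝ) - 1) := by positivity
  have a5 : 0 < (n:ℝ) - 1 + s ^ 2 := by positivity
  have ha : 0 < √((n:ℝ) - 1) := Real.sqrt_pos.2 hm
  have hsq : √((n:ℝ) - 1) ^ 2 = (n:ℝ) - 1 := Real.sq_sqrt hm.le
  have d1 := ((hasDerivAt_id s).const_sub 1).log a2.ne'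
  have d2 := ((hasDerivAt_id s).const_add 1).log a1.ne'
  have d3 := ((hasDerivAt_id s).div_const (√((n:ℝ) - 1))).arctan
  have d := ((d2.sub d1).const_mul (1 / (n:ℝ))).sub
    (d3.const_mul (((n:ℝ) - 2) / ((n : ℝ) * √((n : ℝ) - 1))))
  refine d.congr_deriv ?_
  simp only [id]
  have e1 : 1 + s ^ 2 / ((n:ℝ) - 1) = ((n:ℝ) - 1 + s ^ 2) / ((n:ℝ) - 1) := by field_simp
  have e2 : ((n:ℝ) - 2) / ((n : ℝ) * √((n : ℝ) - 1)) *
      (1 / (1 + (s / √((n:ℝ) - 1)) ^ 2) * (1 / √((n:ℝ) - 1))) =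
      ((n:ℝ) - 2) / ((n:ℝ) * ((n:ℝ) - 1 + s ^ 2)) := by
    rw [div_pow, hsq, e1]
    generalize √((n:ℝ) - 1) = a at *
    rw [← hsq] at a5 ⊢
    field_simp
  rw [e2]
  field_simp
  ring

lemma aux_LG_zero (n : ℕ) : auxLG n 0 = 0 := by simp [auxLG]
lemma aux_LF_zero (n : ℕ) : auxLF n 0 = 0 := by simp [auxLF]

lemma aux_nonneg (n : ℕ) (hn : 2 ≤ n) (s : ℝ) (h1 : -1 < s) (h2 : s < 1)
    (h : 0 ≤ auxLG n s) : 0 ≤ s := by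
  have hn' : (2:ℝ) ≤ n := by exact_mod_cast hn
  have hm : 0 < (n:ℝ) - 1 := by linarith
  have hmono : StrictMonoOn (auxLG n) (Set.Ioo (-1) 1) := by
    apply strictMonoOn_of_deriv_pos (convex_Ioo _ _)
    · intro x hx
      exact (aux_LG_deriv n hn x hx.1 hx.2).continuousAt.continuousWithinAt
    · intro x hx
      rw [interior_Ioo] at hx
      rw [(aux_LG_deriv n hn x hx.1 hx.2).deriv]
      have a1 : 0 < 1 + x := by linarith [hx.1]
      have a2 : 0 < 1 - x := by linarith [hx.2]
      positivity
  by_contra hs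
  have := hmono ⟨h1, h2⟩ (by norm_num : (0:ℝ) ∈ Set.Ioo (-1:ℝ) 1) (not_le.1 hs)
  rw [aux_LG_zero] at this
  linarith

lemma aux_LF_anti (n : ℕ) (hn : 2 ≤ n) : StrictAntiOn (auxLF n) (Set.Icc 0 1) := by
  have hn' : (2:ℝ) ≤ n := by exact_mod_cast hn
  have hm : 0 < (n:ℝ) - 1 := by linarith
  apply strictAntiOn_of_deriv_neg (convex_Icc _ _)
  · intro x hx
    exact (aux_LF_deriv n hn x (by linarith [hx.1])).continuousAt.continuousWithinAt
  · intro x hx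
    rw [interior_Icc] at hx
    rw [(aux_LF_deriv n hn x (by linarith [hx.1])).deriv]
    have a1 : 0 < 1 + x := by linarith [hx.1]
    rw [neg_lt_zero]
    positivity

lemma aux_LF_lip (n : ℕ) (hn : 2 ≤ n) :
    MonotoneOn (fun s => auxLF n s + 2 * s) (Set.Icc 0 1) := by
  have hn' : (2:ℝ) ≤ n := by exact_mod_cast hn
  have hm : 0 < (n:ℝ) - 1 := by linarith
  have hd : ∀ x : ℝ, -1 < x → HasDerivAt (fun s => auxLF n s + 2 * s)
      (-((1 + x ^ 2) / (((n:ℝ) - 1 + x ^ 2) * (1 + x))) + 2 * 1) x := fun x hx =>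
    (aux_LF_deriv n hn x hx).add ((hasDerivAt_id x).const_mul 2)
  apply monotoneOn_of_deriv_nonneg (convex_Icc _ _)
  · intro x hx
    exact (hd x (by linarith [hx.1])).continuousAt.continuousWithinAt
  · intro x hx
    rw [interior_Icc] at hx
    exact (hd x (by linarith [hx.1])).differentiableAt.differentiableWithinAt
  · intro x hx
    rw [interior_Icc] at hx
    rw [(hd x (by linarith [hx.1])).deriv]
    have a1 : 0 < 1 + x := by linarith [hx.1]
    have : (1 + x ^ 2) / (((n:ℝ) - 1 + x ^ 2) * (1 + x)) ≤ 2 := by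
      rw [div_le_iff₀ (by positivity)]
      have : (1 + x ^ 2) * 1 ≤ ((n:ℝ) - 1 + x ^ 2) * (1 + x) :=
        mul_le_mul (by linarith) (by linarith [hx.1]) (by norm_num) (by positivity)
      nlinarith [sq_nonneg x]
    linarith

lemma aux_main (n : ℕ) (hn : 2 ≤ n) (s t : ℝ) (h1 : -1 < s) (h2 : s < 1)
    (ht : 1 ≤ t) (hG : GammaPlus n s = t) :
    0 < auxh n s - Real.exp (auxLF n 1) * t ∧
    auxh n s - Real.exp (auxLF n 1) * t ≤ 4 * t ^ ((1 : ℝ) - (n : ℝ)) := by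
  have hn' : (2:ℝ) ≤ n := by exact_mod_cast hn
  have hn0 : (0:ℝ) < n := by linarith
  have hm : 0 < (n:ℝ) - 1 := by linarith
  have a2 : 0 < 1 - s := by linarith
  have ht0 : 0 < t := by linarith
  rw [aux_Gamma n s h1 h2] at hG
  have hs : 0 ≤ s := by
    apply aux_nonneg n hn s h1 h2
    rw [← hG] at ht
    exact Real.one_le_exp_iff.1 ht
  have a1 : 0 < 1 + s := by linarith
  have m0 : (0:ℝ) ∈ Set.Icc (0:ℝ) 1 := by norm_num
  have m1 : (1:ℝ) ∈ Set.Icc (0:ℝ) 1 := by norm_num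
  have ms : s ∈ Set.Icc (0:ℝ) 1 := ⟨hs, h2.le⟩
  have k1 := aux_LF_anti n hn ms m1 h2
  have k0 := (aux_LF_anti n hn).antitoneOn m0 ms hs
  rw [aux_LF_zero] at k0
  have k2 := aux_LF_lip n hn ms m1 h2.le
  simp only at k2
  have e : auxh n s - Real.exp (auxLF n 1) * t =
      (Real.exp (auxLF n s) - Real.exp (auxLF n 1)) * t := by
    rw [aux_h n hn s h1 h2, Real.exp_add, hG]; ring
  rw [e]
  constructor
  · exact mul_pos (sub_pos.2 (Real.exp_lt_exp.2 k1)) ht0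
  · have b1 : Real.exp (auxLF n s) - Real.exp (auxLF n 1) ≤ 2 * (1 - s) := by
      have : Real.exp (auxLF n 1) =
          Real.exp (auxLF n s) * Real.exp (auxLF n 1 - auxLF n s) := by
        rw [← Real.exp_add]; congr 1; ring
      have q1 := Real.add_one_le_exp (auxLF n 1 - auxLF n s)
      have q2 : Real.exp (auxLF n s) ≤ 1 := Real.exp_le_one_iff.2 k0
      have q3 := Real.exp_pos (auxLF n s)
      rw [this]
      nlinarith
    have b2 : (1 - s) * t ^ (n:ℝ) ≤ 2 := by
      have : (1 - s) * t ^ (n:ℝ) = Real.exp (Real.log (1 + s) -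
          ((n:ℝ) - 2) / √((n : ℝ) - 1) * Real.arctan (s / √((n : ℝ) - 1))) := by
        rw [← hG, ← Real.exp_mul]
        nth_rw 1 [← Real.exp_log a2]
        rw [← Real.exp_add]
        congr 1
        unfold auxLG
        have ha : 0 < √((n:ℝ) - 1) := Real.sqrt_pos.2 hm
        field_simp
        ring
      rw [this]
      have q : 0 ≤ ((n:ℝ) - 2) / √((n : ℝ) - 1) * Real.arctan (s / √((n : ℝ) - 1)) := by
        have : 0 ≤ (n:ℝ) - 2 := by linarith
        have : 0 ≤ Real.arctan (s / √((n : ℝ) - 1)) := Real.arctan_nonneg.2 (by positivity)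
        positivity
      calc _ ≤ Real.exp (Real.log (1 + s)) := Real.exp_le_exp.2 (by linarith)
        _ = 1 + s := Real.exp_log a1
        _ ≤ 2 := by linarith
    rw [Real.rpow_sub ht0, Real.rpow_one]
    have hp : 0 < t ^ (n:ℝ) := Real.rpow_pos_of_pos ht0 _
    have b3 : 1 - s ≤ 2 / t ^ (n:ℝ) := by rwa [le_div_iff₀ hp]
    calc _ ≤ (2 * (2 / t ^ (n:ℝ))) * t := by
          apply mul_le_mul_of_nonneg_right _ ht0.le
          linarith
      _ = _ := by ring

lemma aux_lim (n : ℕ) (hn : 2 ≤ n) (Θ : ℝ) (f : ℝ → ℝ)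
    (hf : ∀ t : ℝ, 1 ≤ t → 0 < f t - Θ * t ∧ f t - Θ * t ≤ 4 * t ^ ((1 : ℝ) - (n : ℝ))) :
    Tendsto (fun t => f t / t) atTop (nhds Θ) := by
  have hn' : (2:ℝ) ≤ n := by exact_mod_cast hn
  have h0 : Tendsto (fun t : ℝ => Θ + 4 * t ^ (-(n:ℝ))) atTop (nhds Θ) := by
    have := ((tendsto_rpow_neg_atTop (by linarith : (0:ℝ) < n)).const_mul 4).const_add Θ
    simpa using this
  refine tendsto_of_tendsto_of_tendsto_of_le_of_le' tendsto_const_nhds h0 ?_ ?_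
  · filter_upwards [eventually_ge_atTop 1] with t ht
    rw [le_div_iff₀ (by linarith)]
    linarith [(hf t ht).1]
  · filter_upwards [eventually_ge_atTop 1] with t ht
    have ht0 : 0 < t := by linarith
    rw [div_le_iff₀ ht0]
    have h := (hf t ht).2
    rw [show (1:ℝ) - n = -n + 1 by ring, Real.rpow_add_one ht0.ne'] at h
    linarith

/-- Asymptotics of `H₊`: with
`Θ₊ = (1 - 1/n)^((n-2)/(2n)) · 4^(-1/n) · exp( ((n-2)/(n√(n-1))) arctan(1/√(n-1)) )`
one has `H₊(t)/t → Θ₊` as `t → ∞`, `t·H₊(t) → Θ₊` as `t → 0⁺`, and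
`0 < H₊(t) - Θ₊ t ≤ C t^(1-n)` for `t ≥ 1` with some constant `C > 0`. -/
theorem stmt7 (n : ℕ) (hn : 2 ≤ n) (u : ℝ → ℝ)
    (hu_mem : ∀ t : ℝ, 0 < t → u t ∈ Set.Ioo (-1 : ℝ) 1)
    (hu_inv : ∀ t : ℝ, 0 < t → GammaPlus n (u t) = t)
    (H : ℝ → ℝ)
    (hH : ∀ t : ℝ, 0 < t →
      H t = (1 + (u t) ^ 2 / ((n : ℝ) - 1)) ^ ((1 : ℝ) / (n : ℝ) - 1 / 2) *
        (1 - (u t) ^ 2) ^ (-(1 : ℝ) / (n : ℝ)))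
    (Θ : ℝ)
    (hΘ : Θ = (1 - 1 / (n : ℝ)) ^ (((n : ℝ) - 2) / (2 * (n : ℝ))) *
        (4 : ℝ) ^ (-(1 : ℝ) / (n : ℝ)) *
        Real.exp ((((n : ℝ) - 2) / ((n : ℝ) * Real.sqrt ((n : ℝ) - 1))) *
          Real.arctan (1 / Real.sqrt ((n : ℝ) - 1)))) :
    Tendsto (fun t => H t / t) atTop (nhds Θ) ∧
    Tendsto (fun t => t * H t) (nhdsWithin 0 (Set.Ioi (0 : ℝ))) (nhds Θ) ∧
    ∃ C : ℝ, 0 < C ∧ ∀ t : ℝ, 1 ≤ t →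
      0 < H t - Θ * t ∧ H t - Θ * t ≤ C * t ^ ((1 : ℝ) - (n : ℝ)) := by
  rw [aux_Theta n hn] at hΘ
  have key : ∀ t : ℝ, 1 ≤ t → 0 < H t - Θ * t ∧
      H t - Θ * t ≤ 4 * t ^ ((1 : ℝ) - (n : ℝ)) := by
    intro t ht
    have ht0 : 0 < t := by linarith
    have := aux_main n hn (u t) t (hu_mem t ht0).1 (hu_mem t ht0).2 ht (hu_inv t ht0)
    rw [hH t ht0, hΘ]
    exact this
  have key2 : ∀ t : ℝ, 1 ≤ t → 0 < H t⁻¹ - Θ * t ∧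
      H t⁻¹ - Θ * t ≤ 4 * t ^ ((1 : ℝ) - (n : ℝ)) := by
    intro t ht
    have ht0 : 0 < t := by linarith
    have hi : 0 < t⁻¹ := inv_pos.2 ht0
    obtain ⟨m1, m2⟩ := hu_mem _ hi
    have hG : GammaPlus n (-u t⁻¹) = t := by
      have := hu_inv _ hi
      rw [aux_Gamma n _ m1 m2] at this
      rw [aux_Gamma n _ (by linarith) (by linarith), aux_Gamma_neg, Real.exp_neg, this, inv_inv]
    have := aux_main n hn (-u t⁻¹) t (by linarith) (by linarith) ht hG
    rw [hH _ hi, hΘ]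
    unfold auxh at this
    rw [neg_sq] at this
    exact this
  refine ⟨aux_lim n hn Θ H key, ?_, 4, by norm_num, key⟩
  have l := (aux_lim n hn Θ (fun t => H t⁻¹) key2).comp tendsto_inv_nhdsGT_zero
  refine l.congr fun t => ?_
  simp [div_eq_mul_inv, mul_comm]
end

section
/- Let n ≥ 2 be an integer, u₊ : (0,∞) → (−1,1) the inverse of Γ₊, and H₊(t) = (1 + u₊(t)²/(n−1))^{(1/n) − (1/2)} · (1 − u₊(t)²)^{−1/n}. For all real numbers 0 < a < b and every q with a/b < q < b/a, there exists k > 0 such that H₊(k·a) = q · H₊(k·b). -/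
open Set Filter Topology

noncomputable def auxL (n : ℕ) (s : ℝ) : ℝ :=
  (1 / (n : ℝ)) * (Real.log (1 + s) - Real.log (1 - s)) +
    ((2 - (n : ℝ)) / ((n : ℝ) * Real.sqrt ((n : ℝ) - 1))) *
      Real.arctan (s / Real.sqrt ((n : ℝ) - 1))

noncomputable def auxF (n : ℕ) (s : ℝ) : ℝ :=
  (1 + s ^ 2 / ((n : ℝ) - 1)) ^ ((1 : ℝ) / (n : ℝ) - 1 / 2) * (1 + s) ^ (-(2 : ℝ) / (n : ℝ)) *
    Real.exp (-(((2 - (n : ℝ)) / ((n : ℝ) * Real.sqrt ((n : ℝ) - 1))) *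
      Real.arctan (s / Real.sqrt ((n : ℝ) - 1))))

theorem aux_gamma (n : ℕ) (s : ℝ) (hs : s ∈ Ioo (-1 : ℝ) 1) :
    GammaPlus n s = Real.exp (auxL n s) := by
  have h1 : 0 < 1 + s := by linarith [hs.1]
  have h2 : 0 < 1 - s := by linarith [hs.2]
  unfold GammaPlus auxL
  rw [Real.exp_add, Real.rpow_def_of_pos (div_pos h1 h2), Real.log_div h1.ne' h2.ne', mul_comm (1 / (n : ℝ))]

theorem auxL_deriv (n : ℕ) (hn : 2 ≤ n) (s : ℝ) (hs : s ∈ Ioo (-1 : ℝ) 1) :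
    HasDerivAt (auxL n) ((1 + s ^ 2) / ((1 - s ^ 2) * ((n : ℝ) - 1 + s ^ 2))) s := by
  have h1 : 0 < 1 + s := by linarith [hs.1]
  have h2 : 0 < 1 - s := by linarith [hs.2]
  have hn' : (2 : ℝ) ≤ n := by exact_mod_cast hn
  have hm : (0 : ℝ) < n - 1 := by linarith
  have hr : 0 < Real.sqrt ((n : ℝ) - 1) := Real.sqrt_pos.2 hm
  have hrr : Real.sqrt ((n : ℝ) - 1) ^ 2 = n - 1 := Real.sq_sqrt hm.le
  have d1 := (((hasDerivAt_id s).const_add 1).log h1.ne')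
  have d2 := (((hasDerivAt_id s).const_sub 1).log h2.ne')
  have d3 := ((hasDerivAt_id s).div_const (Real.sqrt ((n : ℝ) - 1))).arctan
  have d := ((d1.sub d2).const_mul (1 / (n : ℝ))).add
    (d3.const_mul ((2 - (n : ℝ)) / ((n : ℝ) * Real.sqrt ((n : ℝ) - 1))))
  refine HasDerivAt.congr_deriv (f := auxL n) d ?_
  simp only [id]
  generalize Real.sqrt ((n : ℝ) - 1) = r at *
  have hnr : (n : ℝ) = r ^ 2 + 1 := by linarith
  rw [hnr]
  have e1 : (1 - s ^ 2) ≠ 0 := by nlinarith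
  have e2 : r ^ 2 + 1 - 1 + s ^ 2 ≠ 0 := by nlinarith [sq_nonneg s]
  have e3 : r ^ 2 + s ^ 2 ≠ 0 := by nlinarith [sq_nonneg s]
  have e4 : 1 + (s / r) ^ 2 = (r ^ 2 + s ^ 2) / r ^ 2 := by field_simp
  have e5 : r ^ 2 + 1 ≠ 0 := by positivity
  rw [e4]
  have e6 := h1.ne'
  have e7 := h2.ne'
  have e8 := hr.ne'
  rw [show r ^ 2 + 1 - 1 + s ^ 2 = r ^ 2 + s ^ 2 by ring,
    show 1 - s ^ 2 = (1 + s) * (1 - s) by ring]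
  field_simp
  ring

theorem aux_mono (n : ℕ) (hn : 2 ≤ n) : StrictMonoOn (GammaPlus n) (Ioo (-1 : ℝ) 1) := by
  have hn' : (2 : ℝ) ≤ n := by exact_mod_cast hn
  have hL : StrictMonoOn (auxL n) (Ioo (-1 : ℝ) 1) := by
    apply strictMonoOn_of_deriv_pos (convex_Ioo _ _)
    · intro s hs
      exact (auxL_deriv n hn s hs).continuousAt.continuousWithinAt
    · intro s hs
      rw [interior_Ioo] at hs
      rw [(auxL_deriv n hn s hs).deriv]
      have : 0 < 1 - s ^ 2 := by nlinarith [hs.1, hs.2]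
      have : 0 < (n : ℝ) - 1 + s ^ 2 := by nlinarith [sq_nonneg s]
      positivity
  intro x hx y hy hxy
  rw [aux_gamma n x hx, aux_gamma n y hy]
  exact Real.exp_lt_exp.2 (hL hx hy hxy)

theorem auxF_pos (n : ℕ) (hn : 2 ≤ n) (s : ℝ) (hs : -1 < s) : 0 < auxF n s := by
  have hn' : (2 : ℝ) ≤ n := by exact_mod_cast hn
  have hm : (0 : ℝ) < n - 1 := by linarith
  have h1 : 0 < 1 + s := by linarith
  unfold auxF
  positivity

theorem auxF_cont (n : ℕ) (hn : 2 ≤ n) (s : ℝ) (hs : -1 < s) : ContinuousAt (auxF n) s := by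
  have hn' : (2 : ℝ) ≤ n := by exact_mod_cast hn
  have hm : (0 : ℝ) < n - 1 := by linarith
  have h1 : 0 < 1 + s := by linarith
  have h2 : 0 < 1 + s ^ 2 / ((n : ℝ) - 1) := by positivity
  unfold auxF
  have c1 : ContinuousAt (fun s : ℝ => 1 + s ^ 2 / ((n : ℝ) - 1)) s := by fun_prop
  have c2 : ContinuousAt (fun s : ℝ => 1 + s) s := by fun_prop
  refine ((c1.rpow_const (Or.inl h2.ne')).mul (c2.rpow_const (Or.inl h1.ne'))).mul ?_
  have := Real.continuous_arctan
  fun_prop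

theorem aux_H1 (n : ℕ) (s : ℝ) (hs : s ∈ Ioo (-1 : ℝ) 1) :
    (1 + s ^ 2 / ((n : ℝ) - 1)) ^ ((1 : ℝ) / (n : ℝ) - 1 / 2) *
        (1 - s ^ 2) ^ (-(1 : ℝ) / (n : ℝ)) = auxF n s * GammaPlus n s := by
  have h1 : 0 < 1 + s := by linarith [hs.1]
  have h2 : 0 < 1 - s := by linarith [hs.2]
  rw [aux_gamma n s hs]
  unfold auxF auxL
  rw [show 1 - s ^ 2 = (1 + s) * (1 - s) by ring, Real.rpow_def_of_pos (mul_pos h1 h2),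
    Real.log_mul h1.ne' h2.ne', Real.rpow_def_of_pos h1, mul_assoc, mul_assoc,
    ← Real.exp_add, ← Real.exp_add]
  congr 2
  ring

theorem aux_H2 (n : ℕ) (s : ℝ) (hs : s ∈ Ioo (-1 : ℝ) 1) :
    (1 + s ^ 2 / ((n : ℝ) - 1)) ^ ((1 : ℝ) / (n : ℝ) - 1 / 2) *
        (1 - s ^ 2) ^ (-(1 : ℝ) / (n : ℝ)) = auxF n (-s) / GammaPlus n s := by
  have h1 : 0 < 1 + s := by linarith [hs.1]
  have h2 : 0 < 1 - s := by linarith [hs.2]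
  have h := aux_H1 n (-s) ⟨by linarith [hs.2], by linarith [hs.1]⟩
  rw [neg_sq] at h
  rw [h, aux_gamma n s hs, aux_gamma n (-s) ⟨by linarith [hs.2], by linarith [hs.1]⟩,
    div_eq_mul_inv, ← Real.exp_neg]
  congr 2
  unfold auxL
  rw [neg_div, Real.arctan_neg, sub_neg_eq_add, ← sub_eq_add_neg]
  ring

/-- Case 3 of the boundary value problem.
With `u₊` the inverse of `Γ₊` and
`H₊(t) = (1 + u₊(t)²/(n-1))^(1/n - 1/2) · (1 - u₊(t)²)^(-1/n)`:
for all `0 < a < b` and every `q` with `a/b < q < b/a` there exists `k > 0`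
such that `H₊(k a) = q · H₊(k b)`. -/
theorem stmt11 (n : ℕ) (hn : 2 ≤ n) (u : ℝ → ℝ)
    (hu_mem : ∀ t : ℝ, 0 < t → u t ∈ Set.Ioo (-1 : ℝ) 1)
    (hu_inv : ∀ t : ℝ, 0 < t → GammaPlus n (u t) = t)
    (H : ℝ → ℝ)
    (hH : ∀ t : ℝ, 0 < t →
      H t = (1 + (u t) ^ 2 / ((n : ℝ) - 1)) ^ ((1 : ℝ) / (n : ℝ) - 1 / 2) *
        (1 - (u t) ^ 2) ^ (-(1 : ℝ) / (n : ℝ))) :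
    ∀ a b q : ℝ, 0 < a → a < b → a / b < q → q < b / a →
      ∃ k : ℝ, 0 < k ∧ H (k * a) = q * H (k * b) := by
  intro a b q ha hab hq1 hq2
  have hb : 0 < b := ha.trans hab
  have hmono := aux_mono n hn
  have hlt : ∀ s ∈ Ioo (-1 : ℝ) 1, ∀ t, 0 < t → (s < u t ↔ GammaPlus n s < t) := by
    intro s hs t ht
    conv_rhs => rw [← hu_inv t ht]
    exact (hmono.lt_iff_lt hs (hu_mem t ht)).symm
  have hgt : ∀ s ∈ Ioo (-1 : ℝ) 1, ∀ t, 0 < t → (u t < s ↔ t < GammaPlus n s) := by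
    intro s hs t ht
    conv_rhs => rw [← hu_inv t ht]
    exact (hmono.lt_iff_lt (hu_mem t ht) hs).symm
  have hpos : ∀ s ∈ Ioo (-1 : ℝ) 1, 0 < GammaPlus n s := by
    intro s hs
    rw [aux_gamma n s hs]
    exact Real.exp_pos _
  have huc : ∀ t, 0 < t → ContinuousAt u t := by
    intro t ht
    refine continuousAt_of_monotoneOn_of_image_mem_nhds (s := Ioi 0) ?_ (Ioi_mem_nhds ht) ?_
    · intro x hx y hy hxy
      by_contra hc
      push Not at hc
      have := (hlt _ (hu_mem y hy) x hx).1 hc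
      rw [hu_inv y hy] at this
      linarith
    · refine mem_of_superset (Ioo_mem_nhds (hu_mem t ht).1 (hu_mem t ht).2) ?_
      intro s hs
      exact ⟨GammaPlus n s, hpos s hs, hmono.injOn (hu_mem _ (hpos s hs)) hs
        (hu_inv _ (hpos s hs))⟩
  have hutop : Tendsto u atTop (𝓝 1) := by
    refine tendsto_order.2 ⟨fun s hs => ?_, fun s hs => ?_⟩
    · have hm : max s 0 ∈ Ioo (-1 : ℝ) 1 :=
        ⟨lt_of_lt_of_le (by norm_num) (le_max_right _ _), max_lt hs (by norm_num)⟩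
      filter_upwards [eventually_gt_atTop (GammaPlus n (max s 0)), eventually_gt_atTop 0]
        with t h1 h2
      exact (le_max_left _ _).trans_lt ((hlt _ hm t h2).2 h1)
    · filter_upwards [eventually_gt_atTop 0] with t h2
      exact (hu_mem t h2).2.trans hs
  have huzero : Tendsto u (𝓝[>] 0) (𝓝 (-1)) := by
    refine tendsto_order.2 ⟨fun s hs => ?_, fun s hs => ?_⟩
    · filter_upwards [self_mem_nhdsWithin] with t h2
      exact hs.trans (hu_mem t h2).1
    · have hm : min s 0 ∈ Ioo (-1 : ℝ) 1 :=
        ⟨lt_min hs (by norm_num), lt_of_le_of_lt (min_le_right _ _) (by norm_num)⟩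
      filter_upwards [Ioo_mem_nhdsGT (hpos _ hm)] with t h1
      exact ((hgt _ hm t h1.1).2 h1.2).trans_le (min_le_left _ _)
  have hH1 : ∀ t, 0 < t → H t = auxF n (u t) * t := by
    intro t ht
    rw [hH t ht, aux_H1 n _ (hu_mem t ht), hu_inv t ht]
  have hH2 : ∀ t, 0 < t → H t = auxF n (-u t) / t := by
    intro t ht
    rw [hH t ht, aux_H2 n _ (hu_mem t ht), hu_inv t ht]
  have hHpos : ∀ t, 0 < t → 0 < H t := by
    intro t ht
    rw [hH1 t ht]
    exact mul_pos (auxF_pos n hn _ (hu_mem t ht).1) ht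
  have hHc : ∀ t, 0 < t → ContinuousAt H t := by
    intro t ht
    have : ContinuousAt (fun t => auxF n (u t) * t) t :=
      (ContinuousAt.comp (auxF_cont n hn _ (hu_mem t ht).1) (huc t ht)).mul continuousAt_id
    refine this.congr ?_
    filter_upwards [Ioi_mem_nhds ht] with x hx
    exact (hH1 x hx).symm
  have hF1 : 0 < auxF n 1 := auxF_pos n hn 1 (by norm_num)
  have hFc : ContinuousAt (auxF n) 1 := auxF_cont n hn 1 (by norm_num)
  have htop : ∀ c : ℝ, 0 < c → Tendsto (fun k => auxF n (u (k * c))) atTop (𝓝 (auxF n 1)) := by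
    intro c hc
    exact hFc.tendsto.comp (hutop.comp (tendsto_id.atTop_mul_const hc))
  have hzero : ∀ c : ℝ, 0 < c →
      Tendsto (fun k => auxF n (-u (k * c))) (𝓝[>] 0) (𝓝 (auxF n 1)) := by
    intro c hc
    have h0 : Tendsto (fun k : ℝ => k * c) (𝓝[>] 0) (𝓝[>] 0) := by
      refine tendsto_nhdsWithin_iff.2 ⟨?_, ?_⟩
      · have : Tendsto (fun k : ℝ => k * c) (𝓝 0) (𝓝 (0 * c)) :=
          (continuous_id.mul continuous_const).tendsto 0
        rw [zero_mul] at this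
        exact this.mono_left nhdsWithin_le_nhds
      · filter_upwards [self_mem_nhdsWithin] with k hk
        exact mul_pos hk hc
    have h1 := (huzero.comp h0).neg
    rw [neg_neg] at h1
    exact hFc.tendsto.comp h1
  have T1 : Tendsto (fun k => H (k * a) / H (k * b)) atTop (𝓝 (a / b)) := by
    have := ((htop a ha).div (htop b hb) hF1.ne').mul_const (a / b)
    rw [div_self hF1.ne', one_mul] at this
    refine this.congr' ?_
    filter_upwards [eventually_gt_atTop 0] with k hk
    have hp := auxF_pos n hn _ (hu_mem (k * b) (by positivity)).1
    rw [hH1 (k * a) (by positivity), hH1 (k * b) (by positivity)]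
    simp only [Pi.div_apply]
    field_simp
  have T2 : Tendsto (fun k => H (k * a) / H (k * b)) (𝓝[>] 0) (𝓝 (b / a)) := by
    have := ((hzero a ha).div (hzero b hb) hF1.ne').mul_const (b / a)
    rw [div_self hF1.ne', one_mul] at this
    refine this.congr' ?_
    filter_upwards [self_mem_nhdsWithin] with k hk
    have hk : 0 < k := hk
    have hp := auxF_pos n hn (-u (k * b)) (by linarith [(hu_mem (k * b) (by positivity)).2])
    rw [hH2 (k * a) (by positivity), hH2 (k * b) (by positivity)]
    simp only [Pi.div_apply]
    field_simp
  have hc : ContinuousOn (fun k => H (k * a) / H (k * b)) (Ioi 0) := by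
    intro k hk
    have hk : 0 < k := hk
    have ca : ContinuousAt (fun k => H (k * a)) k :=
      ContinuousAt.comp (f := fun k : ℝ => k * a) (hHc (k * a) (by positivity)) (by fun_prop)
    have cb : ContinuousAt (fun k => H (k * b)) k :=
      ContinuousAt.comp (f := fun k : ℝ => k * b) (hHc (k * b) (by positivity)) (by fun_prop)
    exact (ca.div cb (hHpos _ (by positivity)).ne').continuousWithinAt
  obtain ⟨k, hk, hkq⟩ := isPreconnected_Ioi.intermediate_value_Ioo
    (le_principal_iff.2 (Ioi_mem_atTop 0)) (le_principal_iff.2 self_mem_nhdsWithin) hc T1 T2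
    ⟨hq1, hq2⟩
  have hk : 0 < k := hk
  exact ⟨k, hk, (div_eq_iff (hHpos _ (by positivity)).ne').1 hkq⟩
end

section
/- Let n ≥ 2 be an integer, let H : ℝ → ℝ, let x₀ ∈ ℝⁿ with t₀ = |x₀| > 0, and suppose H is differentiable at t₀. Then the radial stretching h : ℝⁿ ∖ {0} → ℝⁿ, h(x) = H(|x|)·x/|x|, is differentiable at x₀ with differential Dh(x₀) = (H(t₀)/t₀)·I + ((t₀·H'(t₀) − H(t₀))/t₀³)·(x₀ ⊗ x₀). Consequently ‖Dh(x₀)‖² = H'(t₀)² + (n−1)·H(t₀)²/t₀² (square of the Hilbert–Schmidt norm), and det Dh(x₀) = H'(t₀)·(H(t₀)/t₀)^{n−1}. -/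
theorem X1 (n : ℕ) (hn : 2 ≤ n) (a : ℝ) (f : EuclideanSpace ℝ (Fin n) →ₗ[ℝ] ℝ) (v : EuclideanSpace ℝ (Fin n)) :
  LinearMap.det (a • LinearMap.id + f.smulRight v) = (a + f v) * a ^ (n-1) := by
  obtain ⟨k, rfl⟩ : ∃ k, n = k + 1 := ⟨n-1, by omega⟩
  by_cases ha : a = 0
  · subst ha
    have : LinearMap.det (f.smulRight v) = 0 := by
      by_contra hd
      have h := LinearMap.ker_eq_bot.2 ((LinearMap.equivOfDetNeZero _ hd).injective)
      have h1 : LinearMap.ker f ≤ ⊥ := by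
        rw [← h]
        intro x hx
        simp at hx
        simp [LinearMap.equivOfDetNeZero, hx]
      have h3 := LinearMap.finrank_range_add_finrank_ker f
      have h4 : Module.finrank ℝ (LinearMap.range f) ≤ 1 := by
        simpa using Submodule.finrank_le (LinearMap.range f)
      rw [le_bot_iff.1 h1] at h3
      simp at h3
      omega
    have hk : k ≠ 0 := by omega
    simp [this, hk]
  · have : a • LinearMap.id + f.smulRight v = a • LinearMap.transvection f (a⁻¹ • v) := by
      ext x : 1
      simp [LinearMap.transvection.apply, smul_smul]
      field_simp
    rw [this, LinearMap.det_smul, LinearMap.transvection.det]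
    simp
    field_simp
    ring

theorem X2 (n : ℕ) (H : ℝ → ℝ) (H' : ℝ)
    (x₀ : EuclideanSpace ℝ (Fin n)) (hx₀ : x₀ ≠ 0)
    (hH : HasDerivAt H H' ‖x₀‖) :
    HasFDerivAt (fun x : EuclideanSpace ℝ (Fin n) => (H ‖x‖ / ‖x‖) • x) 
      ((H ‖x₀‖ / ‖x₀‖) • ContinuousLinearMap.id ℝ (EuclideanSpace ℝ (Fin n)) +
        ((‖x₀‖ * H' - H ‖x₀‖) / ‖x₀‖ ^ 3) • ((innerSL ℝ x₀).smulRight x₀)) x₀ := by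
  have ht : ‖x₀‖ ≠ 0 := norm_ne_zero_iff.2 hx₀
  have hN : HasFDerivAt (fun x : EuclideanSpace ℝ (Fin n) => ‖x‖) ((1/‖x₀‖) • innerSL ℝ x₀) x₀ := by
    have h := (hasStrictFDerivAt_norm_sq x₀).hasFDerivAt.sqrt (by positivity)
    simp only [Real.sqrt_sq (norm_nonneg _)] at h
    refine h.congr_fderiv ?_
    ext y : 1
    simp
    field_simp
  have h := ((hH.div (hasDerivAt_id _) ht).comp_hasFDerivAt x₀ hN).smul (hasFDerivAt_id x₀)
  refine h.congr_fderiv ?_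
  ext y : 1
  simp [smul_smul]
  congr 1
  field_simp

theorem X3 (n : ℕ) (x : EuclideanSpace ℝ (Fin n)) (a c : ℝ) :
   ∑ i : Fin n, ‖(a • ContinuousLinearMap.id ℝ (EuclideanSpace ℝ (Fin n)) + c • ((innerSL ℝ x).smulRight x)) (EuclideanSpace.single i (1 : ℝ))‖ ^ 2
    = n * a^2 + 2 * a * c * ‖x‖^2 + c^2 * ‖x‖^4 := by
  have h : ∀ i : Fin n, ‖(a • ContinuousLinearMap.id ℝ (EuclideanSpace ℝ (Fin n)) + c • ((innerSL ℝ x).smulRight x)) (EuclideanSpace.single i (1 : ℝ))‖ ^ 2 = a^2 + (2 * a * c + c^2 * ‖x‖^2) * (x i)^2 := by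
    intro i
    simp [norm_add_sq_real, norm_smul, inner_smul_left, inner_smul_right, EuclideanSpace.inner_single_left, EuclideanSpace.inner_single_right, mul_pow]
    ring
  simp_rw [h]
  rw [Finset.sum_add_distrib, ← Finset.mul_sum, ← EuclideanSpace.real_norm_sq_eq]
  simp
  ring

/-- Differentiability of a radial stretching `h(x) = H(|x|)·x/|x|` at a point
`x₀ ≠ 0` where `H` is differentiable, with the explicit differential
`Dh(x₀) = (H(t₀)/t₀)·I + ((t₀H'(t₀) - H(t₀))/t₀³)·(x₀ ⊗ x₀)`, the
Hilbert–Schmidt norm identity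
`‖Dh(x₀)‖² = H'(t₀)² + (n-1)H(t₀)²/t₀²`, and
`det Dh(x₀) = H'(t₀)·(H(t₀)/t₀)^(n-1)`. -/
theorem stmt12 (n : ℕ) (hn : 2 ≤ n) (H : ℝ → ℝ) (H' : ℝ)
    (x₀ : EuclideanSpace ℝ (Fin n)) (hx₀ : x₀ ≠ 0)
    (hH : HasDerivAt H H' ‖x₀‖) :
    let t₀ : ℝ := ‖x₀‖
    let A : EuclideanSpace ℝ (Fin n) →L[ℝ] EuclideanSpace ℝ (Fin n) :=
      (H t₀ / t₀) • ContinuousLinearMap.id ℝ (EuclideanSpace ℝ (Fin n)) +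
        ((t₀ * H' - H t₀) / t₀ ^ 3) • ((innerSL ℝ x₀).smulRight x₀)
    HasFDerivAt (fun x : EuclideanSpace ℝ (Fin n) => (H ‖x‖ / ‖x‖) • x) A x₀ ∧
    ∑ i : Fin n, ‖A (EuclideanSpace.single i (1 : ℝ))‖ ^ 2 =
      H' ^ 2 + ((n : ℝ) - 1) * (H t₀) ^ 2 / t₀ ^ 2 ∧
    A.det = H' * (H t₀ / t₀) ^ (n - 1) := by
  intro t₀ A
  have ht : ‖x₀‖ ≠ 0 := norm_ne_zero_iff.2 hx₀
  refine ⟨X2 n H H' x₀ hx₀ hH, ?_, ?_⟩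
  · simp only [A, t₀]
    rw [X3]
    field_simp
    ring
  · have h := X1 n hn (H t₀ / t₀) (((t₀ * H' - H t₀) / t₀ ^ 3) • (innerSL ℝ x₀).toLinearMap) x₀
    have hA : (A : EuclideanSpace ℝ (Fin n) →ₗ[ℝ] EuclideanSpace ℝ (Fin n)) =
        (H t₀ / t₀) • LinearMap.id +
          (((t₀ * H' - H t₀) / t₀ ^ 3) • (innerSL ℝ x₀).toLinearMap).smulRight x₀ := by
      ext x : 1
      simp [A, smul_smul]
    rw [ContinuousLinearMap.det, hA, h]
    congr 1
    simp [t₀]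
    field_simp
    ring
end

section
/- Let n ≥ 4 be an integer and let α_n > 1 satisfy (α_n² + n − 1)^{(n−2)/2} (α_n² − 1) = α_n^n; set b = n·(α_n² + n − 1)^{(n−2)/2} / α_n. Let α ≥ α_n, let (Ω, μ) be a probability measure space, and let X : Ω → [0, ∞) be a measurable function with ∫_Ω X dμ ≥ 1. Then: (i) for every real X₀ ≥ 0 one has the pointwise inequality ( α² + (n−1)·X₀^{2/(n−1)} )^{n/2} ≥ α^n + b·α·X₀, with equality if and only if X₀ = 0 or X₀ = (α/α_n)^{n−1}; (ii) consequently ∫_Ω ( α² + (n−1)·X^{2/(n−1)} )^{n/2} dμ ≥ α^n + b·α. -/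
open MeasureTheory

lemma aux_mono_s15 (c p : ℝ) (hc : 0 ≤ c) (hp : 1 ≤ p) :
    MonotoneOn (fun y : ℝ => (y + c) ^ p - y ^ p) (Set.Ici 0) := by
  have hd : ∀ y : ℝ, HasDerivAt (fun y : ℝ => (y + c) ^ p - y ^ p)
      (1 * p * (y + c) ^ (p - 1) - p * y ^ (p - 1)) y := by
    intro y
    exact (((hasDerivAt_id y).add_const c).rpow_const (Or.inr hp)).sub
      (Real.hasDerivAt_rpow_const (Or.inr hp))
  apply monotoneOn_of_deriv_nonneg (convex_Ici 0)
  · exact fun y _ => (hd y).continuousAt.continuousWithinAt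
  · exact fun y _ => (hd y).differentiableAt.differentiableWithinAt
  · intro y hy
    rw [interior_Ici] at hy
    have hy : 0 < y := hy
    rw [(hd y).deriv]
    have : y ^ (p - 1) ≤ (y + c) ^ (p - 1) :=
      Real.rpow_le_rpow hy.le (by linarith) (by linarith)
    nlinarith

lemma aux_h_s15 (c p : ℝ) (hc : 0 < c) (hp : 1 ≤ p) {u v : ℝ} (hu : 0 < u) (huv : u < v) :
    u * ((u ^ 2 + c) ^ p - (u ^ 2) ^ p) < v * ((v ^ 2 + c) ^ p - (v ^ 2) ^ p) := by
  have h1 : (u ^ 2 + c) ^ p - (u ^ 2) ^ p ≤ (v ^ 2 + c) ^ p - (v ^ 2) ^ p :=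
    aux_mono_s15 c p hc.le hp (Set.mem_Ici.2 (by positivity)) (Set.mem_Ici.2 (by positivity))
      (by nlinarith)
  have h2 : (u ^ 2) ^ p < (u ^ 2 + c) ^ p :=
    Real.rpow_lt_rpow (by positivity) (by linarith) (by linarith)
  nlinarith

lemma aux_main_s15 (p c a B : ℝ) (hc : 0 < c) (hp : 1 ≤ p) (ha : 0 < a)
    (hB : B = (2 * p + 2) * (a * ((a ^ 2 + c) ^ p - (a ^ 2) ^ p)))
    (h0 : (a ^ 2 + c) ^ (p + 1) - (a ^ 2) ^ (p + 1) - B * a = 0) (u : ℝ) (hu : 0 < u)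
    (hne : u ≠ a) : 0 < (u ^ 2 + c) ^ (p + 1) - (u ^ 2) ^ (p + 1) - B * u := by
  set f : ℝ → ℝ := fun u => (u ^ 2 + c) ^ (p + 1) - (u ^ 2) ^ (p + 1) - B * u with hf
  have hd : ∀ y : ℝ, HasDerivAt f
      ((2 * p + 2) * (y * ((y ^ 2 + c) ^ p - (y ^ 2) ^ p)) - B) y := by
    intro y
    have e : HasDerivAt (fun y : ℝ => y ^ 2) (2 * y) y := by
      simpa using hasDerivAt_pow 2 y
    have := (((e.add_const c).rpow_const (p := p + 1) (Or.inr (by linarith))).sub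
      (e.rpow_const (p := p + 1) (Or.inr (by linarith)))).sub ((hasDerivAt_id y).const_mul B)
    rw [show p + 1 - 1 = p by ring] at this
    refine HasDerivAt.congr_deriv (f := f) this ?_
    ring
  have hfa : f a = 0 := h0
  change 0 < f u
  rw [← hfa]
  rcases lt_or_gt_of_ne hne with h | h
  · have : StrictAntiOn f (Set.Icc u a) := by
      apply strictAntiOn_of_deriv_neg (convex_Icc u a)
      · exact fun y _ => (hd y).continuousAt.continuousWithinAt
      · intro y hy
        rw [interior_Icc] at hy
        rw [(hd y).deriv, hB]
        have := aux_h_s15 c p hc hp (hu.trans hy.1) hy.2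
        nlinarith
    exact this ⟨le_rfl, h.le⟩ ⟨h.le, le_rfl⟩ h
  · have : StrictMonoOn f (Set.Icc a u) := by
      apply strictMonoOn_of_deriv_pos (convex_Icc a u)
      · exact fun y _ => (hd y).continuousAt.continuousWithinAt
      · intro y hy
        rw [interior_Icc] at hy
        rw [(hd y).deriv, hB]
        have := aux_h_s15 c p hc hp ha hy.1
        nlinarith
    exact this ⟨le_rfl, h.le⟩ ⟨h.le, le_rfl⟩ h

/-- Case 2 of the random-variable energy minimization.
Let `n ≥ 4`, let `α_n > 1` satisfy `(α_n² + n - 1)^((n-2)/2)(α_n² - 1) = α_n^n`,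
let `b = n(α_n² + n - 1)^((n-2)/2)/α_n`, and let `α ≥ α_n`.  Then pointwise
`(α² + (n-1)X₀^(2/(n-1)))^(n/2) ≥ α^n + bαX₀` for `X₀ ≥ 0`, with equality iff
`X₀ = 0` or `X₀ = (α/α_n)^(n-1)`; consequently for any probability space
`(Ω, μ)` and measurable `X ≥ 0` with mean at least `1`,
`∫ (α² + (n-1)X^(2/(n-1)))^(n/2) dμ ≥ α^n + bα`. -/
theorem stmt15 (n : ℕ) (hn : 4 ≤ n) (αn : ℝ) (hαn1 : 1 < αn)
    (hαncrit : (αn ^ 2 + (n : ℝ) - 1) ^ (((n : ℝ) - 2) / 2) * (αn ^ 2 - 1) = αn ^ (n : ℝ))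
    (b : ℝ) (hb : b = (n : ℝ) * (αn ^ 2 + (n : ℝ) - 1) ^ (((n : ℝ) - 2) / 2) / αn)
    (α : ℝ) (hα : αn ≤ α)
    {Ω : Type*} [MeasurableSpace Ω] (μ : Measure Ω) [IsProbabilityMeasure μ]
    (X : Ω → ℝ) (hXmeas : Measurable X) (hX0 : ∀ ω, 0 ≤ X ω)
    (hmean : 1 ≤ ∫⁻ ω, ENNReal.ofReal (X ω) ∂μ) :
    (∀ X₀ : ℝ, 0 ≤ X₀ →
      ((α ^ 2 + ((n : ℝ) - 1) * X₀ ^ ((2 : ℝ) / ((n : ℝ) - 1))) ^ ((n : ℝ) / 2) ≥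
          α ^ (n : ℝ) + b * α * X₀) ∧
      ((α ^ 2 + ((n : ℝ) - 1) * X₀ ^ ((2 : ℝ) / ((n : ℝ) - 1))) ^ ((n : ℝ) / 2) =
          α ^ (n : ℝ) + b * α * X₀ ↔
        X₀ = 0 ∨ X₀ = (α / αn) ^ ((n : ℝ) - 1))) ∧
    ENNReal.ofReal (α ^ (n : ℝ) + b * α) ≤
      ∫⁻ ω, ENNReal.ofReal
        ((α ^ 2 + ((n : ℝ) - 1) * (X ω) ^ ((2 : ℝ) / ((n : ℝ) - 1))) ^ ((n : ℝ) / 2)) ∂μ := by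
  have hn' : (4 : ℝ) ≤ n := by exact_mod_cast hn
  have ha : 0 < αn := by linarith
  have hα0 : 0 < α := by linarith
  have hA : 0 < αn ^ 2 + ((n : ℝ) - 1) := by nlinarith
  have hsq : ∀ u : ℝ, 0 < u → ∀ q : ℝ, (u ^ 2) ^ q = u ^ (2 * q) := by
    intro u hu q
    rw [← Real.rpow_natCast, ← Real.rpow_mul hu.le]; norm_num
  rw [add_sub_assoc] at hαncrit hb
  set P := (αn ^ 2 + ((n : ℝ) - 1)) ^ (((n : ℝ) - 2) / 2) with hP
  have hPpos : 0 < P := Real.rpow_pos_of_pos hA _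
  have hbpos : 0 ≤ b := by rw [hb]; positivity
  have hba : b * αn = n * P := by rw [hb]; field_simp
  have e1 : (αn ^ 2 + ((n : ℝ) - 1)) ^ ((n : ℝ) / 2) = P * (αn ^ 2 + ((n : ℝ) - 1)) := by
    rw [hP, ← Real.rpow_add_one hA.ne']; congr 1; ring
  have e2 : (αn ^ 2) ^ ((n : ℝ) / 2) = αn ^ (n : ℝ) := by
    rw [hsq αn ha]; congr 1; ring
  have e3 : (αn ^ 2) ^ (((n : ℝ) - 2) / 2) * αn ^ 2 = αn ^ (n : ℝ) := by
    rw [← e2, ← Real.rpow_add_one (by positivity)]; congr 1; ring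
  have hpe : ((n : ℝ) - 2) / 2 + 1 = n / 2 := by ring
  have h0 : (αn ^ 2 + ((n : ℝ) - 1)) ^ ((n : ℝ) / 2) - (αn ^ 2) ^ ((n : ℝ) / 2) - b * αn = 0 := by
    rw [e1, e2, hba]; linarith
  have key : ∀ u : ℝ, 0 < u → u ≠ αn →
      u ^ (n : ℝ) + b * u < (u ^ 2 + ((n : ℝ) - 1)) ^ ((n : ℝ) / 2) := by
    intro u hu hne
    have := aux_main_s15 (((n : ℝ) - 2) / 2) ((n : ℝ) - 1) αn b (by linarith) (by linarith) ha
      (by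
        rw [← hP]
        apply mul_right_cancel₀ ha.ne'
        rw [hba]
        linear_combination n * e3 - n * hαncrit) (by rw [hpe]; exact h0) u hu hne
    rw [hpe, hsq u hu, mul_div_cancel₀ _ two_ne_zero] at this
    linarith
  have keyeq : αn ^ (n : ℝ) + b * αn = (αn ^ 2 + ((n : ℝ) - 1)) ^ ((n : ℝ) / 2) := by
    rw [e2] at h0; linarith
  have main : ∀ X₀ : ℝ, 0 ≤ X₀ →
      ((α ^ 2 + ((n : ℝ) - 1) * X₀ ^ ((2 : ℝ) / ((n : ℝ) - 1))) ^ ((n : ℝ) / 2) ≥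
          α ^ (n : ℝ) + b * α * X₀) ∧
      ((α ^ 2 + ((n : ℝ) - 1) * X₀ ^ ((2 : ℝ) / ((n : ℝ) - 1))) ^ ((n : ℝ) / 2) =
          α ^ (n : ℝ) + b * α * X₀ ↔
        X₀ = 0 ∨ X₀ = (α / αn) ^ ((n : ℝ) - 1)) := by
    have hm : (n : ℝ) - 1 ≠ 0 := by linarith
    intro X₀ hX
    rcases hX.eq_or_lt with rfl | hX
    · have : (α ^ 2 + ((n : ℝ) - 1) * 0 ^ ((2 : ℝ) / ((n : ℝ) - 1))) ^ ((n : ℝ) / 2) =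
          α ^ (n : ℝ) + b * α * 0 := by
        rw [Real.zero_rpow (div_ne_zero two_ne_zero hm), mul_zero, mul_zero, add_zero, add_zero,
          hsq α hα0]
        congr 1; ring
      exact ⟨this.ge, by simp [this]⟩
    obtain ⟨t, ht, rfl⟩ : ∃ t : ℝ, 0 < t ∧ X₀ = t ^ ((n : ℝ) - 1) :=
      ⟨X₀ ^ ((n : ℝ) - 1)⁻¹, by positivity, by
        rw [← Real.rpow_mul hX.le, inv_mul_cancel₀ hm, Real.rpow_one]⟩
    obtain ⟨u, hu, rfl⟩ : ∃ u : ℝ, 0 < u ∧ α = u * t := ⟨α / t, by positivity, by field_simp⟩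
    have htn : 0 < t ^ (n : ℝ) := by positivity
    have l1 : ((u * t) ^ 2 + ((n : ℝ) - 1) * (t ^ ((n : ℝ) - 1)) ^ ((2 : ℝ) / ((n : ℝ) - 1)))
        ^ ((n : ℝ) / 2) = (u ^ 2 + ((n : ℝ) - 1)) ^ ((n : ℝ) / 2) * t ^ (n : ℝ) := by
      have : (t ^ ((n : ℝ) - 1)) ^ ((2 : ℝ) / ((n : ℝ) - 1)) = t ^ 2 := by
        rw [← Real.rpow_mul ht.le, mul_div_cancel₀ _ hm]; norm_num
      rw [this, show (u * t) ^ 2 + ((n : ℝ) - 1) * t ^ 2 = (u ^ 2 + ((n : ℝ) - 1)) * t ^ 2 by ring,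
        Real.mul_rpow (by nlinarith) (by positivity), hsq t ht, mul_div_cancel₀ _ two_ne_zero]
    have l2 : (u * t) ^ (n : ℝ) + b * (u * t) * t ^ ((n : ℝ) - 1) =
        (u ^ (n : ℝ) + b * u) * t ^ (n : ℝ) := by
      have : t ^ (n : ℝ) = t ^ ((n : ℝ) - 1) * t := by
        rw [← Real.rpow_add_one ht.ne']; congr 1; ring
      rw [Real.mul_rpow hu.le ht.le, this]; ring
    rw [l1, l2]
    by_cases hne : u = αn
    · subst hne
      rw [keyeq]
      refine ⟨le_rfl, by simp; right; congr 1; field_simp⟩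
    · have hk := mul_lt_mul_of_pos_right (key u hu hne) htn
      refine ⟨hk.le, fun h => absurd h hk.ne', ?_⟩
      rintro (h | h)
      · exact absurd h hX.ne'
      · exfalso
        rw [Real.rpow_left_inj ht.le (by positivity) hm] at h
        apply hne
        field_simp at h
        linarith
  refine ⟨main, ?_⟩
  calc ENNReal.ofReal (α ^ (n : ℝ) + b * α)
      = ENNReal.ofReal (α ^ (n : ℝ)) + ENNReal.ofReal (b * α) * 1 := by
        rw [mul_one, ENNReal.ofReal_add (by positivity) (by positivity)]
    _ ≤ ENNReal.ofReal (α ^ (n : ℝ)) +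
          ENNReal.ofReal (b * α) * ∫⁻ ω, ENNReal.ofReal (X ω) ∂μ := by gcongr
    _ = ∫⁻ ω, (ENNReal.ofReal (α ^ (n : ℝ)) + ENNReal.ofReal (b * α) * ENNReal.ofReal (X ω)) ∂μ := by
        rw [lintegral_add_left measurable_const, lintegral_const_mul _ hXmeas.ennreal_ofReal]
        simp
    _ ≤ _ := by
        apply lintegral_mono
        intro ω
        have h1 : 0 ≤ b * α := by positivity
        have h2 : 0 ≤ b * α * X ω := mul_nonneg h1 (hX0 ω)
        change ENNReal.ofReal (α ^ (n : ℝ)) + ENNReal.ofReal (b * α) * ENNReal.ofReal (X ω) ≤ _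
        rw [← ENNReal.ofReal_mul h1, ← ENNReal.ofReal_add (by positivity) h2]
        exact ENNReal.ofReal_le_ofReal (main (X ω) (hX0 ω)).1
end

section
/- Let α > 0 and define F : (0, ∞) → ℝ by F(s) = ( α² + (n−1)·s^{2/(n−1)} )^{n/2}. If n ∈ {2, 3}, then F is convex on (0, ∞). If n ≥ 4, then, with s₀ = ((n−3)/(n−1))^{(n−1)/2} · α^{n−1}, the function F is strictly concave on (0, s₀) and strictly convex on (s₀, ∞). -/
open Real Set in
theorem aux_d1 (m α s : ℝ) (hm : 0 < m) (hα : 0 < α) (hs : 0 < s) :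
    HasDerivAt (fun s : ℝ => (α ^ 2 + m * s ^ (2 / m)) ^ ((m + 1) / 2))
      ((m + 1) * ((α ^ 2 + m * s ^ (2 / m)) ^ ((m - 1) / 2) * s ^ (2 / m - 1))) s := by
  have hG : 0 < α ^ 2 + m * s ^ (2 / m) := by positivity
  have h1 := ((Real.hasDerivAt_rpow_const (x := s) (p := 2 / m) (Or.inl hs.ne')).const_mul m).const_add (α ^ 2)
  have h2 := h1.rpow_const (p := (m + 1) / 2) (Or.inl hG.ne')
  convert h2 using 1
  rw [show (m + 1) / 2 - 1 = (m - 1) / 2 by ring]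
  field_simp

open Real Set in
theorem aux_d2 (m α s : ℝ) (hm : 0 < m) (hα : 0 < α) (hs : 0 < s) :
    HasDerivAt (fun s : ℝ => (m + 1) * ((α ^ 2 + m * s ^ (2 / m)) ^ ((m - 1) / 2) * s ^ (2 / m - 1)))
      ((m + 1) * (α ^ 2 + m * s ^ (2 / m)) ^ ((m - 3) / 2) * s ^ (2 / m - 2)
        * (s ^ (2 / m) - (m - 2) / m * α ^ 2)) s := by
  have hG : 0 < α ^ 2 + m * s ^ (2 / m) := by positivity
  have h1 := ((Real.hasDerivAt_rpow_const (x := s) (p := 2 / m) (Or.inl hs.ne')).const_mul m).const_add (α ^ 2)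
  have h2 := h1.rpow_const (p := (m - 1) / 2) (Or.inl hG.ne')
  have h3 := Real.hasDerivAt_rpow_const (x := s) (p := 2 / m - 1) (Or.inl hs.ne')
  have h4 := (h2.mul h3).const_mul (m + 1)
  refine HasDerivAt.congr_deriv (f := fun s : ℝ => (m + 1) * ((α ^ 2 + m * s ^ (2 / m)) ^ ((m - 1) / 2) * s ^ (2 / m - 1))) h4 ?_
  symm
  rw [show (m - 1) / 2 - 1 = (m - 3) / 2 by ring, show 2 / m - 1 - 1 = 2 / m - 2 by ring]
  have e1 : (α ^ 2 + m * s ^ (2 / m)) ^ ((m - 1) / 2)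
      = (α ^ 2 + m * s ^ (2 / m)) ^ ((m - 3) / 2) * (α ^ 2 + m * s ^ (2 / m)) := by
    rw [← Real.rpow_add_one hG.ne']; congr 1; ring
  have e2 : s ^ (2 / m - 1) = s ^ (2 / m - 2) * s := by
    rw [← Real.rpow_add_one hs.ne']; congr 1; ring
  have e3 : s ^ (2 / m) = s ^ (2 / m - 2) * s * s := by
    rw [← Real.rpow_add_one hs.ne', ← Real.rpow_add_one hs.ne']; congr 1; ring
  rw [e1, e2]
  generalize (α ^ 2 + m * s ^ (2 / m)) ^ ((m - 3) / 2) = A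
  rw [e3]
  generalize s ^ (2 / m - 2) = B
  field_simp
  ring

theorem aux_dd (m α s : ℝ) (hm : 0 < m) (hα : 0 < α) (hs : 0 < s) :
    deriv^[2] (fun s : ℝ => (α ^ 2 + m * s ^ (2 / m)) ^ ((m + 1) / 2)) s =
      ((m + 1) * (α ^ 2 + m * s ^ (2 / m)) ^ ((m - 3) / 2) * s ^ (2 / m - 2)
        * (s ^ (2 / m) - (m - 2) / m * α ^ 2)) := by
  show deriv (deriv _) s = _
  rw [← (aux_d2 m α s hm hα hs).deriv]
  apply Filter.EventuallyEq.deriv_eq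
  filter_upwards [Ioi_mem_nhds hs] with t ht
  exact (aux_d1 m α t hm hα ht).deriv

theorem aux_pos (m α s : ℝ) (hm : 0 < m) (hα : 0 < α) (hs : 0 < s) :
    0 < (m + 1) * (α ^ 2 + m * s ^ (2 / m)) ^ ((m - 3) / 2) * s ^ (2 / m - 2) := by
  positivity

theorem aux_cont (m α : ℝ) (hm : 0 < m) (hα : 0 < α) (D : Set ℝ) (hD : ∀ x ∈ D, 0 < x) :
    ContinuousOn (fun s : ℝ => (α ^ 2 + m * s ^ (2 / m)) ^ ((m + 1) / 2)) D :=
  fun s hs => (aux_d1 m α s hm hα (hD s hs)).continuousAt.continuousWithinAt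

theorem aux_s0 (m α : ℝ) (hm : 2 < m) (hα : 0 < α) :
    (((m - 2) / m) ^ (m / 2) * α ^ m) ^ (2 / m) = (m - 2) / m * α ^ 2 := by
  have hm0 : 0 < m := by linarith
  have h : 0 < (m - 2) / m := div_pos (by linarith) hm0
  rw [Real.mul_rpow (by positivity) (by positivity), ← Real.rpow_mul h.le, ← Real.rpow_mul hα.le,
    show m / 2 * (2 / m) = 1 by field_simp, show m * (2 / m) = (2 : ℕ) by field_simp; norm_num,
    Real.rpow_one, Real.rpow_natCast]

/-- For `α > 0` and `F(s) = (α² + (n-1)s^(2/(n-1)))^(n/2)` on `(0,∞)`: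
if `n ∈ {2,3}` then `F` is convex on `(0,∞)`; if `n ≥ 4` then, with
`s₀ = ((n-3)/(n-1))^((n-1)/2) α^(n-1)`, `F` is strictly concave on `(0, s₀)`
and strictly convex on `(s₀, ∞)`. -/
theorem stmt16 (n : ℕ) (hn : 2 ≤ n) (α : ℝ) (hα : 0 < α)
    (F : ℝ → ℝ)
    (hF : ∀ s : ℝ, F s = (α ^ 2 + ((n : ℝ) - 1) * s ^ ((2 : ℝ) / ((n : ℝ) - 1))) ^ ((n : ℝ) / 2)) :
    ((n = 2 ∨ n = 3) → ConvexOn ℝ (Set.Ioi (0 : ℝ)) F) ∧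
    (4 ≤ n →
      StrictConcaveOn ℝ
        (Set.Ioo (0 : ℝ)
          ((((n : ℝ) - 3) / ((n : ℝ) - 1)) ^ (((n : ℝ) - 1) / 2) * α ^ ((n : ℝ) - 1))) F ∧
      StrictConvexOn ℝ
        (Set.Ioi ((((n : ℝ) - 3) / ((n : ℝ) - 1)) ^ (((n : ℝ) - 1) / 2) * α ^ ((n : ℝ) - 1)))
        F) := by
  obtain ⟨m, hm⟩ : ∃ m : ℝ, m = (n : ℝ) - 1 := ⟨_, rfl⟩
  have hn' : (n : ℝ) = m + 1 := by linarith
  have hm1 : 1 ≤ m := by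
    have : (2 : ℝ) ≤ n := by exact_mod_cast hn
    linarith
  have hm0 : 0 < m := by linarith
  have hFe : F = fun s : ℝ => (α ^ 2 + m * s ^ (2 / m)) ^ ((m + 1) / 2) := by
    funext s; rw [hF, ← hm, hn']
  rw [← hm, show (n : ℝ) - 3 = m - 2 by linarith, hFe]
  clear hF hFe
  constructor
  · intro h
    have hm2 : m ≤ 2 := by
      have : (n : ℝ) ≤ 3 := by
        have : n ≤ 3 := by omega
        exact_mod_cast this
      linarith
    have key : ∀ s : ℝ, 0 < s → 0 ≤ deriv^[2] (fun s : ℝ => (α ^ 2 + m * s ^ (2 / m)) ^ ((m + 1) / 2)) s := by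
      intro s hs
      rw [aux_dd m α s hm0 hα hs]
      apply mul_nonneg (aux_pos m α s hm0 hα hs).le
      have h1 : 0 ≤ (2 - m) / m * α ^ 2 :=
        mul_nonneg (div_nonneg (by linarith) hm0.le) (by positivity)
      have h2 : 0 < s ^ (2 / m) := by positivity
      have h3 : (m - 2) / m * α ^ 2 = - ((2 - m) / m * α ^ 2) := by ring
      linarith
    refine convexOn_of_deriv2_nonneg (convex_Ioi 0) (aux_cont m α hm0 hα _ fun x hx => hx) ?_ ?_ ?_
    · rw [interior_Ioi]
      exact fun s hs => (aux_d1 m α s hm0 hα hs).differentiableAt.differentiableWithinAt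
    · rw [interior_Ioi]
      intro s hs
      refine ((aux_d2 m α s hm0 hα hs).differentiableAt.congr_of_eventuallyEq ?_).differentiableWithinAt
      filter_upwards [Ioi_mem_nhds hs] with t ht
      exact (aux_d1 m α t hm0 hα ht).deriv
    · rw [interior_Ioi]
      exact fun s hs => key s hs
  · intro h
    have hm2 : 2 < m := by
      have : (4 : ℝ) ≤ n := by exact_mod_cast h
      linarith
    have hs0 := aux_s0 m α hm2 hα
    have hp : 0 < ((m - 2) / m) ^ (m / 2) * α ^ m := by
      have h : 0 < (m - 2) / m := div_pos (by linarith) hm0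
      positivity
    generalize ((m - 2) / m) ^ (m / 2) * α ^ m = s₀ at hs0 hp
    have h2m : 0 < 2 / m := by positivity
    constructor
    · refine strictConcaveOn_of_deriv2_neg (convex_Ioo _ _) (aux_cont m α hm0 hα _ fun x hx => hx.1) ?_
      rw [interior_Ioo]
      intro s hs
      rw [aux_dd m α s hm0 hα hs.1]
      apply mul_neg_of_pos_of_neg (aux_pos m α s hm0 hα hs.1)
      have := Real.rpow_lt_rpow hs.1.le hs.2 h2m
      linarith
    · refine strictConvexOn_of_deriv2_pos (convex_Ioi _) (aux_cont m α hm0 hα _ fun x hx => hp.trans hx) ?_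
      rw [interior_Ioi]
      intro s hs
      have hs' : 0 < s := hp.trans hs
      rw [aux_dd m α s hm0 hα hs']
      apply mul_pos (aux_pos m α s hm0 hα hs')
      have := Real.rpow_lt_rpow hp.le hs h2m
      linarith
end

section
/- Let X and Y be bounded open subsets of ℝⁿ, let h_j : X → Y (j = 1, 2, …) be homeomorphisms of X onto Y, and let h : X → ℝⁿ be continuous. Suppose h_j → h uniformly on compact subsets of X, and suppose the following uniform boundary condition holds: for every ε > 0 there exists δ > 0 such that for every x ∈ X with dist(x, ∂X) < δ one has dist(h_j(x), ∂Y) < ε for all j and dist(h(x), ∂Y) < ε. Then for every compact connected set K ⊂ Y, the preimage h⁻¹(K) is a compact, preconnected subset of X. -/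
open Filter Topology Metric

/-- Theorem 1.7: monotonicity of weak limits of homeomorphisms.
Let `X, Y` be bounded open subsets of `ℝⁿ`, let `h_j : X → Y` be homeomorphisms
of `X` onto `Y` converging to a continuous map `h` uniformly on compact subsets
of `X`, and assume the uniform distance-to-boundary condition: for every
`ε > 0` there is `δ > 0` such that every `x ∈ X` with `dist(x, ∂X) < δ`
satisfies `dist(h_j(x), ∂Y) < ε` for all `j` and `dist(h(x), ∂Y) < ε`.
Then for every compact connected `K ⊆ Y` the preimage `h⁻¹(K)` (taken within
`X`) is compact and preconnected. -/
theorem stmt19 (n : ℕ)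
    (X Y : Set (EuclideanSpace ℝ (Fin n)))
    (hXopen : IsOpen X) (hXbdd : Bornology.IsBounded X)
    (hYopen : IsOpen Y) (hYbdd : Bornology.IsBounded Y)
    (hj : ℕ → EuclideanSpace ℝ (Fin n) → EuclideanSpace ℝ (Fin n))
    (hhomeo : ∀ j : ℕ, ∃ e : X ≃ₜ Y, ∀ x : X, hj j (x : EuclideanSpace ℝ (Fin n)) = (e x : EuclideanSpace ℝ (Fin n)))
    (h : EuclideanSpace ℝ (Fin n) → EuclideanSpace ℝ (Fin n))
    (hcont : ContinuousOn h X)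
    (hconv : ∀ K : Set (EuclideanSpace ℝ (Fin n)), K ⊆ X → IsCompact K →
      TendstoUniformlyOn hj h atTop K)
    (hbdry : ∀ ε : ℝ, 0 < ε → ∃ δ : ℝ, 0 < δ ∧ ∀ x ∈ X,
      infDist x (frontier X) < δ →
        (∀ j : ℕ, infDist (hj j x) (frontier Y) < ε) ∧ infDist (h x) (frontier Y) < ε) :
    ∀ K : Set (EuclideanSpace ℝ (Fin n)), K ⊆ Y → IsCompact K → IsConnected K →
      IsCompact (X ∩ h ⁻¹' K) ∧ IsPreconnected (X ∩ h ⁻¹' K) := by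
  intro K hKY hK hKc
  rcases Nat.eq_zero_or_pos n with rfl | hn
  · exact ⟨(Set.toFinite _).isCompact, Set.Subsingleton.isPreconnected (Set.subsingleton_of_subsingleton)⟩
  haveI : Nonempty (Fin n) := ⟨⟨0, hn⟩⟩
  have hfr : ∀ Z : Set (EuclideanSpace ℝ (Fin n)), Z.Nonempty → Bornology.IsBounded Z →
      (frontier Z).Nonempty := by
    intro Z hZ hb
    apply nonempty_frontier_iff.2 ⟨hZ, ?_⟩
    rintro rfl
    exact NormedSpace.unbounded_univ ℝ _ hb
  have hYne : (frontier Y).Nonempty := hfr Y (hKc.nonempty.mono hKY) hYbdd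
  obtain ⟨ε0, hε0, hthick⟩ := hK.exists_thickening_subset_open hYopen hKY
  have hfar : ∀ y ∈ thickening (ε0 / 2) K, ¬ infDist y (frontier Y) < ε0 / 2 := by
    intro y hy hlt
    obtain ⟨z, hz, hyz⟩ := (infDist_lt_iff hYne).1 hlt
    obtain ⟨k, hk, hyk⟩ := mem_thickening_iff.1 hy
    have hzY : z ∈ Y := hthick (mem_thickening_iff.2 ⟨k, hk, by
      have := dist_triangle_left z k y
      linarith⟩)
    rw [hYopen.frontier_eq] at hz
    exact hz.2 hzY
  obtain ⟨δ, hδ, hδb⟩ := hbdry (ε0 / 2) (by linarith)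
  set D : Set (EuclideanSpace ℝ (Fin n)) := closure X ∩ {x | δ ≤ infDist x (frontier X)} with hD
  have hDX : D ⊆ X := by
    rintro x ⟨hx, hx2⟩
    by_contra hxX
    have : x ∈ frontier X := by rw [hXopen.frontier_eq]; exact ⟨hx, hxX⟩
    have h0 := infDist_zero_of_mem this
    have hx3 : δ ≤ infDist x (frontier X) := hx2
    linarith
  have hDc : IsCompact D :=
    hXbdd.isCompact_closure.inter_right (isClosed_le continuous_const (continuous_infDist_pt _))
  have hKt : ∀ r : ℝ, 0 < r → K ⊆ thickening r K := fun r hr => self_subset_thickening hr K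
  have hAD : X ∩ h ⁻¹' K = D ∩ h ⁻¹' K := by
    ext x
    constructor
    · rintro ⟨hx, hxK⟩
      refine ⟨⟨subset_closure hx, ?_⟩, hxK⟩
      by_contra hlt
      exact hfar _ (hKt _ (by linarith) hxK) (hδb x hx (not_le.1 hlt)).2
    · rintro ⟨hx, hxK⟩
      exact ⟨hDX hx, hxK⟩
  have hAcl : IsClosed (D ∩ h ⁻¹' K) :=
    (hcont.mono hDX).preimage_isClosed_of_isClosed hDc.isClosed hK.isClosed
  rw [hAD]
  refine ⟨hDc.of_isClosed_subset hAcl Set.inter_subset_left, ?_⟩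
  rw [isPreconnected_iff_subset_of_fully_disjoint_closed hAcl]
  intro u v hu hv huv hdisj
  by_contra hcon
  push Not at hcon
  obtain ⟨hnu, hnv⟩ := hcon
  obtain ⟨a, ha, hau⟩ := Set.not_subset.1 hnu
  obtain ⟨b, hb, hbv⟩ := Set.not_subset.1 hnv
  have hav : a ∈ v := (huv ha).resolve_left hau
  have hbu : b ∈ u := (huv hb).resolve_right hbv
  obtain ⟨U, V, hU, hV, huU, hvV, hUV⟩ := normal_separation hu hv hdisj
  have hF : IsCompact (D \ (U ∪ V)) := hDc.diff (hU.union hV)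
  have hFi : IsCompact (h '' (D \ (U ∪ V))) :=
    hF.image_of_continuousOn (hcont.mono (Set.diff_subset.trans hDX))
  have hFK : Disjoint (h '' (D \ (U ∪ V))) K := by
    rw [Set.disjoint_left]
    rintro _ ⟨x, ⟨hxD, hx⟩, rfl⟩ hxK
    exact hx (Set.union_subset_union huU hvV (huv ⟨hxD, hxK⟩))
  obtain ⟨η0, hη0, hη⟩ := hFK.exists_thickenings hFi hK.isClosed
  set η := min η0 (ε0 / 2) with hηd
  have hηpos : 0 < η := lt_min hη0 (by linarith)
  obtain ⟨j, hjj⟩ := ((Metric.tendstoUniformlyOn_iff.1 (hconv D hDX hDc)) η hηpos).exists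
  obtain ⟨e, he⟩ := hhomeo j
  have hN : IsPreconnected (thickening η K) := by
    rw [← add_ball_zero, ← Set.image2_add]
    rw [← Set.image_prod]
    exact (hKc.isPreconnected.prod (convex_ball _ _).isPreconnected).image _
      (continuous_fst.add continuous_snd).continuousOn
  have hNε : thickening η K ⊆ thickening (ε0 / 2) K := thickening_mono (min_le_right _ _) _
  have hNY : thickening η K ⊆ Y :=
    (thickening_mono ((min_le_right _ _).trans (by linarith)) _).trans hthick
  set P : Set (EuclideanSpace ℝ (Fin n)) :=
    (fun y : Y => ((e.symm y : X) : EuclideanSpace ℝ (Fin n))) '' (Subtype.val ⁻¹' thickening η K) with hP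
  have hPc : IsPreconnected P := by
    apply IsPreconnected.image _ _ (continuous_subtype_val.comp e.symm.continuous).continuousOn
    rw [← Topology.IsInducing.subtypeVal.isPreconnected_image, Subtype.image_preimage_coe,
      Set.inter_eq_right.2 hNY]
    exact hN
  have hPj : ∀ x ∈ P, x ∈ X ∧ hj j x ∈ thickening η K := by
    rintro _ ⟨y, hy, rfl⟩
    refine ⟨(e.symm y).2, ?_⟩
    rw [he, e.apply_symm_apply]
    exact hy
  have hPD : P ⊆ D := by
    intro x hx
    obtain ⟨hxX, hxN⟩ := hPj x hx
    refine ⟨subset_closure hxX, ?_⟩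
    by_contra hlt
    exact hfar _ (hNε hxN) ((hδb x hxX (not_le.1 hlt)).1 j)
  have hPUV : P ⊆ U ∪ V := by
    intro x hx
    by_contra hxn
    have h1 : hj j x ∈ thickening η0 (h '' (D \ (U ∪ V))) :=
      mem_thickening_iff.2 ⟨h x, ⟨x, ⟨hPD hx, hxn⟩, rfl⟩, by
        rw [dist_comm]; exact (hjj x (hPD hx)).trans_le (min_le_left _ _)⟩
    exact Set.disjoint_left.1 hη h1 (thickening_mono (min_le_left _ _) _ (hPj x hx).2)
  have hmem : ∀ x ∈ D ∩ h ⁻¹' K, x ∈ P := by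
    rintro x ⟨hxD, hxK⟩
    refine ⟨e ⟨x, hDX hxD⟩, ?_, by simp⟩
    change ((e ⟨x, hDX hxD⟩ : Y) : EuclideanSpace ℝ (Fin n)) ∈ thickening η K
    rw [← he ⟨x, hDX hxD⟩]
    exact mem_thickening_iff.2 ⟨h x, hxK, by rw [dist_comm]; exact hjj x hxD⟩
  obtain ⟨z, -, hzU, hzV⟩ := hPc U V hU hV hPUV ⟨b, hmem b hb, huU hbu⟩ ⟨a, hmem a ha, hvV hav⟩
  exact Set.disjoint_left.1 hUV hzU hzV
end
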